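/- arXiv:1812.08480 — 2 statements merged into one kernel-verified Lean document; each statement's English description precedes it below -/
import Mathlib

section
/- There is a constant C > 0 such that for every n ≥ 4, with q = n − ⌈n/log₂ n⌉, there exists a finitely supported probability distribution D over deterministic strategies for the HiddenPermutation problem with n positions such that for every secret (z,π) ∈ {0,1}^n × S_n, the expected value (over g ∼ D) of the least T such that every secret (z',π') consistent with the guessing history produced by g against (z,π) in its first T queries satisfies π'(j) = π(j) and z'_{π(j)} = z_{π(j)} for all j ≤ q, is at most C·n·log₂ log₂ n. -/
/-- The score `f_{z,π}(x)`: the length of the longest common prefix of `x` and `z`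
in the order imposed by `π` (positions are 0-indexed, so `π j` for `(j : ℕ) < i`
corresponds to the 1-indexed positions `π(1),…,π(i)`). -/
def score (n : ℕ) (z : Fin n → Bool) (π : Equiv.Perm (Fin n)) (x : Fin n → Bool) : ℕ :=
  Nat.findGreatest (fun i => ∀ j : Fin n, (j : ℕ) < i → z (π j) = x (π j)) n

/-- The list of scores produced in the first `k` queries when the deterministic
strategy `g` plays against the secret `(z, π)`. -/
def histScores (n : ℕ) (g : List ℕ → Fin n → Bool) (z : Fin n → Bool)
    (π : Equiv.Perm (Fin n)) : ℕ → List ℕ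
  | 0 => []
  | k + 1 => histScores n g z π k ++ [score n z π (g (histScores n g z π k))]

/-- `(z, π)` is the unique secret consistent with the guessing history produced by the
deterministic strategy `g` against `(z, π)` in its first `T` queries. -/
def Identifies (n : ℕ) (g : List ℕ → Fin n → Bool) (z : Fin n → Bool)
    (π : Equiv.Perm (Fin n)) (T : ℕ) : Prop :=
  ∀ (z' : Fin n → Bool) (π' : Equiv.Perm (Fin n)),
    (∀ k < T, score n z' π' (g (histScores n g z π k)) =
        score n z π (g (histScores n g z π k))) →
    z' = z ∧ π' = π


open scoped ENNReal

/-- Every secret consistent with the guessing history produced by `g` against `(z,π)` in its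
first `T` queries agrees with `(z,π)` on the first `q` positions: `π'(j) = π(j)` and
`z'_{π(j)} = z_{π(j)}` for all (1-indexed) `j ≤ q`. -/
def IdentifiesPrefix (n : ℕ) (g : List ℕ → Fin n → Bool) (z : Fin n → Bool)
    (π : Equiv.Perm (Fin n)) (q T : ℕ) : Prop :=
  ∀ (z' : Fin n → Bool) (π' : Equiv.Perm (Fin n)),
    (∀ k < T, score n z' π' (g (histScores n g z π k)) =
        score n z π (g (histScores n g z π k))) →
    ∀ j : Fin n, (j : ℕ) < q → π' j = π j ∧ z' (π j) = z (π j)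

/-- The least `T` such that after `T` queries of `g` against `(z,π)` the first `q` values of
the permutation and the corresponding bits are determined; `∞` if no such `T` exists. -/
noncomputable def timeToPrefix (n : ℕ) (g : List ℕ → Fin n → Bool) (z : Fin n → Bool)
    (π : Equiv.Perm (Fin n)) (q : ℕ) : ℕ∞ :=
  sInf {T : ℕ∞ | ∃ m : ℕ, T = (m : ℕ∞) ∧ IdentifiesPrefix n g z π q m}

/-!
By averaging over a uniformly random relabelling of positions and bits, it suffices to find one
deterministic strategy whose total cost over all secrets is at most `O(n log log n)` per secret.

Going through the positions in the order of `π`, the strategy maintains disjoint sets `V i ∋ π i`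
and a query `c` that is right at the values `π i` seen so far. Given block sizes
`w 0 < w 1 < ⋯ < w L` with `w (l + 1) ≈ w l ^ (4 / 3)`, where `w 0` is a power of `log n` and
`L = O(log log n)`, the level of `V i` is the greatest `l` with `(#(V i) - 1) * w l ^ 3 < n`.

* If at least `w l` positions have level `l < L`, then flipping `c` on a `1 / w l` fraction of `w l`
  of their sets lowers the score with probability at least `1 / 2`, and the new score reveals one
  position whose level rises. So raising a level costs `O(1)` queries on average.
* If no level is crowded, the next position `p` is treated. One query yields its bit, another one
  tells whether `π p` lies outside all the sets `V i`. If it does not, the positions of level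
  `0, 1, …` are determined completely, `log n` queries each, until `π p` becomes free. The sets of
  level at least `l` cover only `L * n / w l ^ 2` values while `n / log n` are unused, so this is
  needed so rarely that it costs one query on average. Bisecting the free values `3 log (w 0)` times
  gives `V p`.
* At the end, at most `∑ l < L, w l = O(n ^ (1 / 3) log log n)` positions have more than one
  candidate, and `log n` queries determine each.
-/

namespace HiddenPermutation

open Finset

/-- A secret `(z, π)` of the game with `n` positions. -/
abbrev Secret (n : ℕ) := (Fin n → Bool) × Equiv.Perm (Fin n)

variable {n q : ℕ}

lemma lt_score_iff {z x : Fin n → Bool} {π : Equiv.Perm (Fin n)} {p : Fin n} :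
    (p : ℕ) < score n z π x ↔ ∀ j ≤ p, z (π j) = x (π j) := by
  constructor
  · intro h j hj
    exact Nat.findGreatest_spec (P := fun i => ∀ j : Fin n, (j : ℕ) < i → z (π j) = x (π j))
      (Nat.zero_le n) (by simp) j (lt_of_le_of_lt hj h)
  · intro h
    exact Nat.le_findGreatest p.isLt fun j hj => h j (Nat.lt_succ_iff.1 hj)

/-- Under the promise that the secret lies in `S`, some deterministic strategy `g` determines the
first `q` positions, on the secret `s` after `τ s` queries, with `∑ s ∈ S, τ s ≤ ∑ s ∈ S, f s`.
Only the sum is bounded, so `f` describes the cost of `g` on a uniformly random secret of `S`. -/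
def Solvable (q : ℕ) (S : Finset (Secret n)) (f : Secret n → ℕ) : Prop :=
  ∃ (g : List ℕ → Fin n → Bool) (τ : Secret n → ℕ),
    (∀ s ∈ S, ∀ s' ∈ S,
      (∀ k < τ s, score n s'.1 s'.2 (g (histScores n g s.1 s.2 k)) =
        score n s.1 s.2 (g (histScores n g s.1 s.2 k))) →
      ∀ j : Fin n, (j : ℕ) < q → s'.2 j = s.2 j ∧ s'.1 (s.2 j) = s.1 (s.2 j)) ∧
    ∑ s ∈ S, τ s ≤ ∑ s ∈ S, f s

section Solvable

variable {S : Finset (Secret n)} {f f' : Secret n → ℕ}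

lemma Solvable.of_sum_le (h : Solvable q S f) (hf : ∑ s ∈ S, f s ≤ ∑ s ∈ S, f' s) :
    Solvable q S f' := by
  obtain ⟨g, τ, hg, hτ⟩ := h
  exact ⟨g, τ, hg, hτ.trans hf⟩

lemma Solvable.mono (h : Solvable q S f) (hf : ∀ s ∈ S, f s ≤ f' s) : Solvable q S f' :=
  h.of_sum_le (sum_le_sum hf)

lemma solvable_of_agree
    (h : ∀ s ∈ S, ∀ s' ∈ S, ∀ j : Fin n, (j : ℕ) < q →
      s'.2 j = s.2 j ∧ s'.1 (s.2 j) = s.1 (s.2 j)) : Solvable q S f :=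
  ⟨fun _ _ => false, fun _ => 0, fun s hs s' hs' _ => h s hs s' hs', by simp⟩

lemma solvable_empty : Solvable q ∅ f :=
  solvable_of_agree (by simp)

/-- The strategy which first queries `x` and then, if the answer is `a`, follows `G a`. -/
def queryThen (x : Fin n → Bool) (G : ℕ → List ℕ → Fin n → Bool) : List ℕ → Fin n → Bool
  | [] => x
  | a :: l => G a l

lemma histScores_queryThen (x : Fin n → Bool) (G : ℕ → List ℕ → Fin n → Bool)
    (z : Fin n → Bool) (π : Equiv.Perm (Fin n)) (k : ℕ) :
    histScores n (queryThen x G) z π (k + 1) =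
      score n z π x :: histScores n (G (score n z π x)) z π k := by
  induction k with
  | zero => rfl
  | succ k ih =>
    rw [histScores, ih]
    rfl

lemma Solvable.query {β : Type*} [DecidableEq β] (x : Fin n → Bool) (ans : Secret n → β)
    (hans : ∀ s ∈ S, ∀ s' ∈ S, score n s.1 s.2 x = score n s'.1 s'.2 x → ans s = ans s')
    (h : ∀ b, Solvable q {s ∈ S | ans s = b} f) : Solvable q S (fun s => f s + 1) := by
  choose g τ hg hτ using h
  let G : ℕ → List ℕ → Fin n → Bool :=
    Function.extend (fun s : S => score n s.1.1 s.1.2 x) (fun s => g (ans s)) fun _ _ _ => false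
  have hG (s) (hs : s ∈ S) : G (score n s.1 s.2 x) = g (ans s) :=
    Function.FactorsThrough.extend_apply (f := fun s : S => score n s.1.1 s.1.2 x)
      (g := fun s : S => g (ans s)) (fun s s' h => congrArg g (hans s s.2 s' s'.2 h)) _ ⟨s, hs⟩
  refine ⟨queryThen x G, fun s => τ (ans s) s + 1, fun s hs s' hs' heq => ?_, ?_⟩
  · have hx : score n s'.1 s'.2 x = score n s.1 s.2 x := heq 0 (Nat.succ_pos _)
    refine hg (ans s) s (by simp [hs]) s' (by simp [hs', hans s' hs' s hs hx]) fun k hk => ?_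
    simpa only [histScores_queryThen, queryThen, hG s hs] using heq (k + 1) (Nat.succ_lt_succ hk)
  · simp only [sum_add_distrib]
    refine Nat.add_le_add_right ?_ _
    have hmaps : ∀ s ∈ S, ans s ∈ S.image ans := fun s => mem_image_of_mem ans
    rw [← sum_fiberwise_of_maps_to hmaps, ← sum_fiberwise_of_maps_to hmaps f]
    refine sum_le_sum fun b _ => le_of_eq_of_le (sum_congr rfl fun s hs => ?_) (hτ b)
    rw [(mem_filter.1 hs).2]

lemma Solvable.ask {x : Fin n → Bool} {p : Fin n}
    (hx : ∀ s ∈ S, ∀ j < p, s.1 (s.2 j) = x (s.2 j))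
    (hyes : Solvable q {s ∈ S | s.1 (s.2 p) = x (s.2 p)} f)
    (hno : Solvable q {s ∈ S | s.1 (s.2 p) ≠ x (s.2 p)} f) :
    Solvable q S (fun s => f s + 1) := by
  have hscore (s) (hs : s ∈ S) : (p : ℕ) < score n s.1 s.2 x ↔ s.1 (s.2 p) = x (s.2 p) := by
    rw [lt_score_iff]
    refine ⟨fun h => h p le_rfl, fun h j hj => ?_⟩
    rcases hj.eq_or_lt with rfl | hj
    exacts [h, hx s hs j hj]
  refine .query x (fun s => decide (s.1 (s.2 p) = x (s.2 p))) (fun s hs s' hs' h => ?_) ?_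
  · rw [decide_eq_decide, ← hscore s hs, ← hscore s' hs', h]
  · rintro (_ | _)
    · simpa only [decide_eq_false_iff_not] using hno
    · simpa only [decide_eq_true_eq] using hyes

/-- The query that agrees with `c` exactly outside `G`. -/
def flipOn (c : Fin n → Bool) (G : Finset (Fin n)) (r : Fin n) : Bool :=
  xor (c r) (decide (r ∈ G))

lemma eq_flipOn_iff {c : Fin n → Bool} {G : Finset (Fin n)} {r : Fin n} :
    c r = flipOn c G r ↔ r ∉ G := by
  cases h : c r <;> simp [flipOn, h]

/-- Querying `c` flipped on `G`, with all positions before `p` outside `G`, tells whether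
`π p ∈ G`, provided that it is known whether `c` is right at `π p`. -/
lemma Solvable.ask_mem {c : Fin n → Bool} {p : Fin n} {b : Bool} {G : Finset (Fin n)}
    (hbit : ∀ s ∈ S, ∀ j < p, s.1 (s.2 j) = c (s.2 j)) (hG : ∀ s ∈ S, ∀ j < p, s.2 j ∉ G)
    (hp : ∀ s ∈ S, s.1 (s.2 p) = xor (c (s.2 p)) b)
    (hmem : Solvable q {s ∈ S | s.2 p ∈ G} f) (hnotMem : Solvable q {s ∈ S | s.2 p ∉ G} f) :
    Solvable q S (fun s => f s + 1) := by
  have hx : ∀ s ∈ S, ∀ j < p, s.1 (s.2 j) = flipOn c G (s.2 j) := fun s hs j hj => by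
    rw [hbit s hs j hj, eq_flipOn_iff]
    exact hG s hs j hj
  have hxp (s) (hs : s ∈ S) : s.1 (s.2 p) = flipOn c G (s.2 p) ↔ b = decide (s.2 p ∈ G) := by
    rw [hp s hs, flipOn, Bool.xor_right_inj]
  cases b
  · have hmatch (s) (hs : s ∈ S) : s.1 (s.2 p) = flipOn c G (s.2 p) ↔ s.2 p ∉ G :=
      (hxp s hs).trans (by simp)
    refine .ask hx ?_ ?_
    · rwa [filter_congr hmatch]
    · rwa [filter_congr fun s hs => (hmatch s hs).not_left]
  · have hmatch (s) (hs : s ∈ S) : s.1 (s.2 p) = flipOn c G (s.2 p) ↔ s.2 p ∈ G :=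
      (hxp s hs).trans (by simp)
    refine .ask hx ?_ ?_
    · rwa [filter_congr hmatch]
    · rwa [filter_congr fun s hs => (hmatch s hs).not]

end Solvable

section candidates

variable {I J : Finset (Fin n)} {V V' : Fin n → Finset (Fin n)} {c : Fin n → Bool}

/-- The secrets `(z, π)` that are still possible when it is known that `π i ∈ V i` and
`z (π i) = c (π i)` for all `i ∈ I`. -/
def candidates (I : Finset (Fin n)) (V : Fin n → Finset (Fin n)) (c : Fin n → Bool) :
    Finset (Secret n) :=
  {s | ∀ i ∈ I, s.2 i ∈ V i ∧ s.1 (s.2 i) = c (s.2 i)}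

lemma mem_candidates {s : Secret n} :
    s ∈ candidates I V c ↔ ∀ i ∈ I, s.2 i ∈ V i ∧ s.1 (s.2 i) = c (s.2 i) := by
  simp only [candidates, mem_filter_univ]

lemma candidates_mono (h : ∀ i ∈ I, V i ⊆ V' i) : candidates I V c ⊆ candidates I V' c :=
  fun _ hs => mem_candidates.2 fun i hi =>
    (mem_candidates.1 hs i hi).imp_left fun hmem => h i hi hmem

lemma candidates_piecewise_inter_singleton (hJ : J ⊆ I) (v : Fin n → Fin n) :
    candidates I (J.piecewise (fun i => V i ∩ {v i}) V) c =
      {s ∈ candidates I V c | ∀ i ∈ J, s.2 i = v i} := by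
  ext s
  simp only [mem_filter, mem_candidates, piecewise]
  grind

lemma candidates_update {i : Fin n} (hi : i ∈ I) {W : Finset (Fin n)} (hW : W ⊆ V i) :
    candidates I (Function.update V i W) c = {s ∈ candidates I V c | s.2 i ∈ W} := by
  ext s
  simp only [mem_filter, mem_candidates, Function.update_apply]
  grind

/-- Learning that `π p ∈ G` and whether `c` is right at `π p` is again a knowledge of the same
form, because no earlier position can lie in `G`. -/
lemma candidates_insert {p : Fin n} (hp : p ∉ I) {G : Finset (Fin n)}
    (hG : ∀ i ∈ I, Disjoint (V i) G) (b : Bool) :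
    candidates (insert p I) (Function.update V p G) (fun r => if r ∈ G then xor (c r) b else c r) =
      {s ∈ candidates I V c | s.1 (s.2 p) = xor (c (s.2 p)) b ∧ s.2 p ∈ G} := by
  ext s
  have hne (i) (hi : i ∈ I) : i ≠ p := ne_of_mem_of_not_mem hi hp
  have hnotMem (i) (hi : i ∈ I) (h : s.2 i ∈ V i) : s.2 i ∉ G :=
    disjoint_left.1 (hG i hi) h
  simp only [mem_filter, mem_candidates, forall_mem_insert, Function.update_self]
  grind

end candidates

/-! ### Splitting the candidate sets -/

section Split

variable {I J : Finset (Fin n)} {V F : Fin n → Finset (Fin n)} {c : Fin n → Bool}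
  {f : Secret n → ℕ}

lemma mem_candidates_piecewise_sdiff (hJ : J ⊆ I) {s : Secret n} :
    s ∈ candidates I (J.piecewise (fun i => V i \ F i) V) c ↔
      s ∈ candidates I V c ∧ ∀ i ∈ J, s.2 i ∉ F i := by
  simp only [mem_candidates, piecewise]
  grind

/-- The candidate sets after a query flipped on `⋃ i ∈ J, F i` whose score is the position
`k ∈ J`. -/
def hit (V F : Fin n → Finset (Fin n)) (J : Finset (Fin n)) (k : Fin n) :
    Fin n → Finset (Fin n) :=
  Function.update ({i ∈ J | i < k}.piecewise (fun i => V i \ F i) V) k (F k)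

lemma mem_candidates_hit (hJ : J ⊆ I) (hF : ∀ i ∈ J, F i ⊆ V i) {k : Fin n} (hk : k ∈ J)
    {s : Secret n} :
    s ∈ candidates I (hit V F J k) c ↔
      s ∈ candidates I V c ∧ s.2 k ∈ F k ∧ ∀ i ∈ J, i < k → s.2 i ∉ F i := by
  have hFk := hF k hk
  rw [hit, candidates_update (hJ hk) (by simpa [piecewise] using hFk), mem_filter,
    mem_candidates_piecewise_sdiff ((filter_subset _ _).trans hJ)]
  simp only [mem_filter]
  grind

lemma min_filter_eq_coe_iff {α : Type*} [LinearOrder α] {s : Finset α} {P : α → Prop}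
    [DecidablePred P] {a : α} :
    (s.filter P).min = a ↔ a ∈ s ∧ P a ∧ ∀ b ∈ s, b < a → ¬ P b := by
  refine ⟨fun h => ?_, fun ⟨ha, hPa, hlt⟩ => le_antisymm (min_le (mem_filter.2 ⟨ha, hPa⟩)) ?_⟩
  · obtain ⟨ha, hPa⟩ := mem_filter.1 (mem_of_min h)
    exact ⟨ha, hPa, fun b hb hba hPb => hba.not_ge (min_le_of_eq (mem_filter.2 ⟨hb, hPb⟩) h)⟩
  · refine Finset.le_min fun b hb => WithTop.coe_le_coe.2 (le_of_not_gt fun hba => ?_)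
    exact hlt b (mem_filter.1 hb).1 hba (mem_filter.1 hb).2

lemma match_flipOn_biUnion_iff (hV : (I : Set (Fin n)).PairwiseDisjoint V) (hJ : J ⊆ I)
    (hF : ∀ i ∈ J, F i ⊆ V i) {s : Secret n} (hs : s ∈ candidates I V c) {i : Fin n} (hi : i ∈ I) :
    s.1 (s.2 i) = flipOn c (J.biUnion F) (s.2 i) ↔ ¬ (i ∈ J ∧ s.2 i ∈ F i) := by
  obtain ⟨hmem, hbit⟩ := mem_candidates.1 hs i hi
  have hunion : s.2 i ∈ J.biUnion F ↔ i ∈ J ∧ s.2 i ∈ F i := by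
    refine ⟨fun h => ?_, fun h => mem_biUnion.2 ⟨i, h⟩⟩
    obtain ⟨j, hj, hmemF⟩ := mem_biUnion.1 h
    obtain rfl : i = j := hV.elim_finset (mem_coe.2 hi) (mem_coe.2 (hJ hj)) _ hmem (hF j hj hmemF)
    exact ⟨hj, hmemF⟩
  rw [hbit, eq_flipOn_iff, hunion]

lemma min_le_min_of_score_eq (hI : IsLowerSet (I : Set (Fin n)))
    (hV : (I : Set (Fin n)).PairwiseDisjoint V) (hJ : J ⊆ I) (hF : ∀ i ∈ J, F i ⊆ V i)
    {s s' : Secret n} (hs : s ∈ candidates I V c) (hs' : s' ∈ candidates I V c)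
    (h : score n s.1 s.2 (flipOn c (J.biUnion F)) = score n s'.1 s'.2 (flipOn c (J.biUnion F))) :
    {i ∈ J | s.2 i ∈ F i}.min ≤ {i ∈ J | s'.2 i ∈ F i}.min := by
  refine Finset.le_min fun i hi => ?_
  obtain ⟨hiJ, hiF⟩ := mem_filter.1 hi
  have hmiss : ¬ (i : ℕ) < score n s.1 s.2 (flipOn c (J.biUnion F)) := by
    rw [h, lt_score_iff]
    exact fun hmatch =>
      (match_flipOn_biUnion_iff hV hJ hF hs' (hJ hiJ)).1 (hmatch i le_rfl) ⟨hiJ, hiF⟩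
  rw [lt_score_iff] at hmiss
  push Not at hmiss
  obtain ⟨j, hji, hj⟩ := hmiss
  have hjF := not_not.1 ((match_flipOn_biUnion_iff hV hJ hF hs (hI hji (hJ hiJ))).not.1 hj)
  exact (min_le (mem_filter.2 hjF)).trans (WithTop.coe_le_coe.2 hji)

/-- Querying `c` flipped on `⋃ i ∈ J, F i` reveals the least `k ∈ J` with `π k ∈ F k`, if any. -/
lemma Solvable.split (hI : IsLowerSet (I : Set (Fin n))) (hV : (I : Set (Fin n)).PairwiseDisjoint V)
    (hJ : J ⊆ I) (hF : ∀ i ∈ J, F i ⊆ V i)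
    (hnone : Solvable q (candidates I (J.piecewise (fun i => V i \ F i) V) c) f)
    (hhit : ∀ k ∈ J, Solvable q (candidates I (hit V F J k) c) f) :
    Solvable q (candidates I V c) (fun s => f s + 1) := by
  refine .query (flipOn c (J.biUnion F)) (fun s => {i ∈ J | s.2 i ∈ F i}.min)
    (fun s hs s' hs' h => (min_le_min_of_score_eq hI hV hJ hF hs hs' h).antisymm
      (min_le_min_of_score_eq hI hV hJ hF hs' hs h.symm)) fun b => ?_
  induction b using WithTop.recTopCoe with
  | top =>
    convert hnone using 1
    ext s
    simp only [mem_filter, mem_candidates_piecewise_sdiff hJ, Finset.min_eq_top,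
      filter_eq_empty_iff]
  | coe k =>
    by_cases hk : k ∈ J
    · convert hhit k hk using 1
      ext s
      simp only [mem_filter, mem_candidates_hit hJ hF hk, min_filter_eq_coe_iff, hk, true_and]
    · convert solvable_empty
      exact filter_eq_empty_iff.2 fun s _ h => hk (min_filter_eq_coe_iff.1 h).1

end Split

/-! ### Determining values by bisection -/

section Determine

variable {S : Finset (Secret n)} {f : Secret n → ℕ} {c : Fin n → Bool}

lemma Solvable.bisect {i : Fin n} {A : Finset (Fin n)} {k : ℕ}
    (hbit : ∀ s ∈ S, ∀ j ≤ i, s.1 (s.2 j) = c (s.2 j)) (hlt : ∀ s ∈ S, ∀ j < i, s.2 j ∉ A)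
    (hmem : ∀ s ∈ S, s.2 i ∈ A)
    (h : ∀ W ⊆ A, (#W - 1) * 2 ^ k ≤ #A - 1 → Solvable q {s ∈ S | s.2 i ∈ W} f) :
    Solvable q S (fun s => f s + k) := by
  induction k generalizing A S with
  | zero => simpa only [filter_true_of_mem hmem, add_zero] using h A subset_rfl (by simp)
  | succ k ih =>
    obtain ⟨B, hBA, hB⟩ := exists_subset_card_eq (Nat.div_le_self #A 2)
    have half {U : Finset (Fin n)} (hUA : U ⊆ A) (hU : (#U - 1) * 2 ≤ #A - 1) :
        Solvable q {s ∈ S | s.2 i ∈ U} (fun s => f s + k) := by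
      refine ih (fun s hs => hbit s (mem_filter.1 hs).1)
        (fun s hs j hj hjU => hlt s (mem_filter.1 hs).1 j hj (hUA hjU))
        (fun s hs => (mem_filter.1 hs).2) fun W hWU hW => ?_
      convert h W (hWU.trans hUA) (by rw [pow_succ, ← mul_assoc]; lia) using 1
      rw [filter_filter]
      exact filter_congr fun s _ => and_iff_right_of_imp fun hsW => hWU hsW
    have hcompl := half (U := A \ B) sdiff_subset (by rw [card_sdiff_of_subset hBA]; lia)
    rw [filter_congr fun s hs => mem_sdiff.trans (and_iff_right (hmem s hs))] at hcompl
    exact .ask_mem (b := false) (fun s hs j hj => hbit s hs j hj.le)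
      (fun s hs j hj hjB => hlt s hs j hj (hBA hjB))
      (fun s hs => (hbit s hs i le_rfl).trans (Bool.xor_false _).symm) (half hBA (by lia)) hcompl

lemma Solvable.locate {i : Fin n} {A : Finset (Fin n)} {k : ℕ} (hcard : #A ≤ 2 ^ k)
    (hbit : ∀ s ∈ S, ∀ j ≤ i, s.1 (s.2 j) = c (s.2 j)) (hlt : ∀ s ∈ S, ∀ j < i, s.2 j ∉ A)
    (hmem : ∀ s ∈ S, s.2 i ∈ A) (h : ∀ v ∈ A, Solvable q {s ∈ S | s.2 i = v} f) :
    Solvable q S (fun s => f s + k) := by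
  refine .bisect hbit hlt hmem fun W hWA hW => ?_
  have hW1 : #W ≤ 1 := by
    have hlt : (#W - 1) * 2 ^ k < 1 * 2 ^ k := by have := Nat.pow_pos (n := k) two_pos; lia
    have := Nat.lt_of_mul_lt_mul_right hlt
    lia
  obtain rfl | ⟨v, hv⟩ := W.eq_empty_or_nonempty
  · simpa using solvable_empty
  · obtain rfl := eq_singleton_iff_unique_mem.2 ⟨hv, fun w hw => card_le_one.1 hW1 w hw v hv⟩
    simpa only [mem_singleton] using h v (singleton_subset_iff.1 hWA)

lemma Solvable.determine {I J : Finset (Fin n)} {V : Fin n → Finset (Fin n)} {k : ℕ}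
    (hn : n ≤ 2 ^ k) (hI : IsLowerSet (I : Set (Fin n))) (hV : (I : Set (Fin n)).PairwiseDisjoint V)
    (hJ : J ⊆ I) (hS : S ⊆ candidates I V c)
    (h : ∀ v : Fin n → Fin n, Solvable q {s ∈ S | ∀ i ∈ J, s.2 i = v i} f) :
    Solvable q S (fun s => f s + k * #J) := by
  induction J using Finset.induction_on generalizing S with
  | empty => simpa using h id
  | insert j J hj ih =>
    have hjI : j ∈ I := hJ (mem_insert_self j J)
    have hmem (s) (hs : s ∈ S) (i) (hi : i ≤ j) := mem_candidates.1 (hS hs) i (hI hi hjI)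
    simp only [card_insert_of_notMem hj, Nat.mul_succ, ← add_assoc]
    refine .locate (i := j) (A := V j) ((card_finset_fin_le _).trans hn)
      (fun s hs i hi => (hmem s hs i hi).2)
      (fun s hs i hi => disjoint_left.1 (hV (hI hi.le hjI) hjI hi.ne) (hmem s hs i hi.le).1)
      (fun s hs => (hmem s hs j le_rfl).1) fun v _ => ?_
    refine ih ((subset_insert j J).trans hJ) ((filter_subset _ S).trans hS) fun w => ?_
    convert h (Function.update w j v) using 1
    ext s
    simp only [mem_filter, forall_mem_insert, Function.update_self, and_assoc]
    refine and_congr_right fun _ => and_congr_right fun _ => forall₂_congr fun i hi => ?_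
    rw [Function.update_of_ne (ne_of_mem_of_not_mem hi hj)]

end Determine

/-! ### Counting candidates -/

section Counting

/-- Permuting the values of `π` by `a.2` and flipping the bits where `a.1` is true. This action
serves both for counting candidates and for randomizing strategies. -/
def relabel (a s : Secret n) : Secret n :=
  (fun r => xor (s.1 (a.2.symm r)) (a.1 r), s.2.trans a.2)

lemma relabel_snd_apply (a s : Secret n) (j : Fin n) : (relabel a s).2 j = a.2 (s.2 j) := rfl

lemma relabel_fst_apply (a s : Secret n) (j : Fin n) :
    (relabel a s).1 (a.2 j) = xor (s.1 j) (a.1 (a.2 j)) := by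
  simp only [relabel, Equiv.symm_apply_apply]

lemma relabel_injective (a : Secret n) : Function.Injective (relabel a) := by
  intro s s' h
  have hperm : s.2 = s'.2 :=
    Equiv.ext fun j => a.2.injective (DFunLike.congr_fun (congrArg Prod.snd h) j)
  refine Prod.ext (funext fun j => ?_) hperm
  have hbit := congrFun (congrArg Prod.fst h) (a.2 j)
  simpa only [relabel_fst_apply, Bool.xor_left_inj] using hbit

variable {I J : Finset (Fin n)} {V F : Fin n → Finset (Fin n)} {c : Fin n → Bool}

lemma card_filter_eq_le (hV : (I : Set (Fin n)).PairwiseDisjoint V) {i : Fin n} (hi : i ∈ I)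
    {v w : Fin n} (hv : v ∈ V i) (hw : w ∈ V i) :
    #{s ∈ candidates I V c | s.2 i = v} ≤ #{s ∈ candidates I V c | s.2 i = w} := by
  let a : Secret n := (fun r => xor (c r) (c (Equiv.swap v w r)), Equiv.swap v w)
  refine card_le_card_of_injOn (relabel a) (fun s hs => ?_) (relabel_injective a).injOn
  obtain ⟨hcand, rfl⟩ := mem_filter.1 hs
  refine mem_filter.2 ⟨mem_candidates.2 fun j hj => ?_, Equiv.swap_apply_left _ _⟩
  obtain ⟨hmem, hbit⟩ := mem_candidates.1 hcand j hj
  rw [relabel_snd_apply, relabel_fst_apply, hbit]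
  refine ⟨?_, by simp [a, Bool.xor_left_comm (c (s.2 j))]⟩
  have hcase (h : s.2 j ∈ V i) : j = i := hV.elim_finset hj hi _ hmem h
  simp only [a, Equiv.swap_apply_def]
  split_ifs with h h
  · exact hcase (h ▸ hv) ▸ hw
  · exact hcase (h ▸ hw) ▸ hv
  · exact hmem

lemma card_filter_mem_mul_card (hV : (I : Set (Fin n)).PairwiseDisjoint V) {i : Fin n} (hi : i ∈ I)
    {W : Finset (Fin n)} (hW : W ⊆ V i) :
    #{s ∈ candidates I V c | s.2 i ∈ W} * #(V i) = #W * #(candidates I V c) := by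
  obtain rfl | ⟨w, hw⟩ := W.eq_empty_or_nonempty
  · simp
  have hfiber {U : Finset (Fin n)} (hU : U ⊆ V i) :
      #{s ∈ candidates I V c | s.2 i ∈ U} = #U * #{s ∈ candidates I V c | s.2 i = w} := by
    have hmaps : Set.MapsTo (fun s : Secret n => s.2 i)
        ({s ∈ candidates I V c | s.2 i ∈ U} : Finset (Secret n)) U :=
      fun s hs => (mem_filter.1 hs).2
    rw [card_eq_sum_card_fiberwise hmaps, ← smul_eq_mul, ← sum_const]
    refine sum_congr rfl fun v hv => ?_
    rw [filter_filter, filter_congr fun s _ => and_iff_right_of_imp fun h : s.2 i = v => h ▸ hv]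
    exact (card_filter_eq_le hV hi (hU hv) (hW hw)).antisymm
      (card_filter_eq_le hV hi (hW hw) (hU hv))
  have hall := hfiber subset_rfl
  rw [filter_true_of_mem fun s hs => (mem_candidates.1 hs i hi).1] at hall
  rw [hall, hfiber hW]
  ring

lemma mul_card_filter_sdiff_le (hV : (I : Set (Fin n)).PairwiseDisjoint V) {i : Fin n}
    (hi : i ∈ I) {W : Finset (Fin n)} (hW : W ⊆ V i) {m : ℕ} (hm : #(V i) ≤ m * #W) :
    m * #{s ∈ candidates I V c | s.2 i ∈ V i \ W} ≤ (m - 1) * #(candidates I V c) := by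
  obtain hempty | hpos := (#(V i)).eq_zero_or_pos
  · simp [card_eq_zero.1 hempty]
  refine Nat.le_of_mul_le_mul_right ?_ hpos
  rw [mul_assoc, card_filter_mem_mul_card hV hi sdiff_subset, card_sdiff_of_subset hW,
    mul_right_comm, ← mul_assoc]
  refine Nat.mul_le_mul_right _ ?_
  rw [Nat.mul_sub, Nat.sub_mul, one_mul]
  exact Nat.sub_le_sub_left hm _

lemma pow_mul_card_piecewise_sdiff_le (hV : (I : Set (Fin n)).PairwiseDisjoint V) (hJ : J ⊆ I)
    (hF : ∀ i ∈ J, F i ⊆ V i) {m : ℕ} (hm : ∀ i ∈ J, #(V i) ≤ m * #(F i)) :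
    m ^ #J * #(candidates I (J.piecewise (fun i => V i \ F i) V) c) ≤
      (m - 1) ^ #J * #(candidates I V c) := by
  induction J using Finset.induction_on with
  | empty => simp
  | insert j J hj ih =>
    rw [forall_mem_insert] at hF hm
    set U := J.piecewise (fun i => V i \ F i) V with hU
    have hUj : U j = V j := piecewise_eq_of_notMem _ _ _ hj
    have hjI : j ∈ I := hJ (mem_insert_self j J)
    have hUV : U ≤ V := J.piecewise_le_of_le_of_le (fun _ => sdiff_subset) le_rfl
    have hstep := mul_card_filter_sdiff_le (c := c) (hV.mono hUV) hjI (hUj ▸ hF.1) (hUj ▸ hm.1)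
    rw [piecewise_insert, card_insert_of_notMem hj, ← hU,
      candidates_update hjI (hUj ▸ sdiff_subset)]
    rw [hUj] at hstep
    calc _ = m ^ #J * (m * #{s ∈ candidates I U c | s.2 j ∈ V j \ F j}) := by ring
      _ ≤ m ^ #J * ((m - 1) * #(candidates I U c)) := Nat.mul_le_mul_left _ hstep
      _ = (m - 1) * (m ^ #J * #(candidates I U c)) := by ring
      _ ≤ (m - 1) * ((m - 1) ^ #J * #(candidates I V c)) :=
          Nat.mul_le_mul_left _ (ih ((subset_insert j J).trans hJ) hF.2 hm.2)
      _ = _ := by ring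

lemma two_mul_pow_le {m : ℕ} (hm : 1 ≤ m) : 2 * (m - 1) ^ m ≤ m ^ m := by
  obtain ⟨a, rfl⟩ := Nat.exists_eq_add_of_le' hm
  rw [Nat.add_sub_cancel]
  calc 2 * a ^ (a + 1) ≤ a ^ (a + 1) + (a + 1) * a ^ a * 1 := by ring_nf; lia
    _ ≤ (a + 1) ^ (a + 1) := by
        simpa using pow_add_mul_le_add_pow (Nat.zero_le a) (Nat.zero_le (2 * a + 1)) (a + 1)

lemma two_mul_card_piecewise_sdiff_le (hV : (I : Set (Fin n)).PairwiseDisjoint V) (hJ : J ⊆ I)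
    (hne : J.Nonempty) (hF : ∀ i ∈ J, F i ⊆ V i) (hm : ∀ i ∈ J, #(V i) ≤ #J * #(F i)) :
    2 * #(candidates I (J.piecewise (fun i => V i \ F i) V) c) ≤ #(candidates I V c) := by
  have hpos : 0 < #J ^ #J := Nat.pow_pos hne.card_pos
  refine Nat.le_of_mul_le_mul_left ?_ hpos
  calc #J ^ #J * (2 * #(candidates I (J.piecewise (fun i => V i \ F i) V) c))
      = 2 * (#J ^ #J * #(candidates I (J.piecewise (fun i => V i \ F i) V) c)) := by ring
    _ ≤ 2 * ((#J - 1) ^ #J * #(candidates I V c)) :=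
        Nat.mul_le_mul_left 2 (pow_mul_card_piecewise_sdiff_le hV hJ hF hm)
    _ = 2 * (#J - 1) ^ #J * #(candidates I V c) := by ring
    _ ≤ #J ^ #J * #(candidates I V c) := Nat.mul_le_mul_right _ (two_mul_pow_le hne.card_pos)

lemma card_filter_apply_mem_le {p j : Fin n} (hp : p ∉ I) (hj : j ∉ I) (A : Finset (Fin n)) :
    #{s ∈ candidates I V c | s.2 p ∈ A} ≤ #{s ∈ candidates I V c | s.2 j ∈ A} := by
  let reorder : Secret n → Secret n := fun s => (s.1, (Equiv.swap j p).trans s.2)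
  have hinj : reorder.Injective := fun s s' h => by
    obtain ⟨hbits, hperm⟩ := Prod.ext_iff.1 h
    exact Prod.ext hbits (Equiv.ext fun k => by
      simpa [reorder] using DFunLike.congr_fun hperm (Equiv.swap j p k))
  refine card_le_card_of_injOn reorder (fun s hs => ?_) hinj.injOn
  obtain ⟨hcand, hpA⟩ := mem_filter.1 hs
  refine mem_filter.2 ⟨mem_candidates.2 fun i hi => ?_, by simpa [reorder] using hpA⟩
  have hswap : Equiv.swap j p i = i :=
    Equiv.swap_apply_of_ne_of_ne (ne_of_mem_of_not_mem hi hj) (ne_of_mem_of_not_mem hi hp)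
  simpa only [reorder, Equiv.trans_apply, hswap] using mem_candidates.1 hcand i hi

lemma card_filter_notMem_le {i : Fin n} (hi : i ∈ I) {s : Secret n} (hs : s ∈ candidates I V c) :
    #{j ∈ Iᶜ | s.2 j ∈ V i} ≤ #(V i) - 1 := by
  rw [← card_erase_of_mem (mem_candidates.1 hs i hi).1]
  refine card_le_card_of_injOn s.2 (fun j hj => ?_) s.2.injective.injOn
  obtain ⟨hjI, hjV⟩ := mem_filter.1 hj
  refine mem_erase.2 ⟨fun h => ?_, hjV⟩
  exact mem_compl.1 hjI (s.2.injective h ▸ hi)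

lemma mul_card_filter_next_mem_le {p i : Fin n} (hp : p ∉ I) (hi : i ∈ I) :
    (n - #I) * #{s ∈ candidates I V c | s.2 p ∈ V i} ≤ (#(V i) - 1) * #(candidates I V c) := by
  calc (n - #I) * #{s ∈ candidates I V c | s.2 p ∈ V i}
      = ∑ _j ∈ Iᶜ, #{s ∈ candidates I V c | s.2 p ∈ V i} := by
        rw [sum_const, card_compl, Fintype.card_fin, smul_eq_mul]
    _ ≤ ∑ j ∈ Iᶜ, #{s ∈ candidates I V c | s.2 j ∈ V i} :=
        sum_le_sum fun j hj => card_filter_apply_mem_le hp (mem_compl.1 hj) (V i)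
    _ = ∑ s ∈ candidates I V c, #{j ∈ Iᶜ | s.2 j ∈ V i} :=
        sum_card_bipartiteAbove_eq_sum_card_bipartiteBelow fun j (s : Secret n) => s.2 j ∈ V i
    _ ≤ ∑ _s ∈ candidates I V c, (#(V i) - 1) := sum_le_sum fun s hs => card_filter_notMem_le hi hs
    _ = (#(V i) - 1) * #(candidates I V c) := by rw [sum_const, smul_eq_mul, mul_comm]

end Counting

/-! ### Searching for the value of the next position -/

section Search

variable {I J : Finset (Fin n)} {V V' : Fin n → Finset (Fin n)} {v : Fin n → Fin n}
  {c : Fin n → Bool} {ℓ : Fin n → ℕ} {p : Fin n} {l L k base : ℕ} {b : Bool}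

/-- The values that are candidates for a position of level at least `l`, where `ℓ` assigns a level
to each position. -/
def deep (I : Finset (Fin n)) (V : Fin n → Finset (Fin n)) (ℓ : Fin n → ℕ) (l : ℕ) :
    Finset (Fin n) :=
  {i ∈ I | l ≤ ℓ i}.biUnion V

lemma mem_deep {r : Fin n} : r ∈ deep I V ℓ l ↔ ∃ i ∈ I, l ≤ ℓ i ∧ r ∈ V i := by
  simp only [deep, mem_biUnion, mem_filter, and_assoc]

lemma notMem_deep_of_card_le_one (hp : p ∉ I) (hL : ∀ i ∈ I, L ≤ ℓ i → #(V i) ≤ 1) {s : Secret n}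
    (hs : s ∈ candidates I V c) : s.2 p ∉ deep I V ℓ L := by
  rw [mem_deep]
  rintro ⟨i, hi, hLi, hpi⟩
  have heq : s.2 p = s.2 i := card_le_one.1 (hL i hi hLi) _ hpi _ (mem_candidates.1 hs i hi).1
  exact hp (s.2.injective heq ▸ hi)

lemma mem_deep_succ_iff (hV : (I : Set (Fin n)).PairwiseDisjoint V) (hp : p ∉ I) {s : Secret n}
    (hv : ∀ i ∈ I, ℓ i = l → s.2 i = v i) :
    s.2 p ∈ deep I V ℓ (l + 1) ↔ s.2 p ∈ deep I V ℓ l ∧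
      s.2 p ∉ {i ∈ I | ℓ i = l}.biUnion (fun i => V i \ {v i}) := by
  simp only [mem_deep, mem_biUnion, mem_filter, mem_sdiff, mem_singleton]
  constructor
  · rintro ⟨i, hi, hli, hpi⟩
    refine ⟨⟨i, hi, by lia, hpi⟩, ?_⟩
    rintro ⟨j, ⟨hj, hlj⟩, hpj, -⟩
    obtain rfl : i = j := hV.elim_finset hi hj _ hpi hpj
    lia
  · rintro ⟨⟨i, hi, hli, hpi⟩, hnot⟩
    refine ⟨i, hi, lt_of_le_of_ne hli fun hil => hnot ⟨i, ⟨hi, hil.symm⟩, hpi, fun heq => ?_⟩, hpi⟩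
    rw [← hv i hi hil.symm] at heq
    exact hp (s.2.injective heq ▸ hi)

lemma biUnion_sdiff_subset_deep :
    {i ∈ I | ℓ i = l}.biUnion (fun i => V i \ {v i}) ⊆ deep I V ℓ l :=
  biUnion_subset.2 fun i hi _ hr => mem_deep.2
    ⟨i, (mem_filter.1 hi).1, (mem_filter.1 hi).2.ge, (mem_sdiff.1 hr).1⟩

lemma disjoint_piecewise_inter_biUnion_sdiff (hV : (I : Set (Fin n)).PairwiseDisjoint V)
    (hV' : V' ≤ V) (hJ : J ⊆ I) {i : Fin n} (hi : i ∈ I) :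
    Disjoint (J.piecewise (fun i => V' i ∩ {v i}) V' i) (J.biUnion fun i => V i \ {v i}) := by
  refine (disjoint_biUnion_right _ _ _).2 fun j hj => ?_
  obtain rfl | hij := eq_or_ne i j
  · rw [piecewise_eq_of_mem _ _ _ hj]
    exact disjoint_sdiff.mono_left inter_subset_right
  · have hle : J.piecewise (fun i => V' i ∩ {v i}) V' ≤ V :=
      J.piecewise_le_of_le_of_le (fun i => inter_subset_left.trans (hV' i)) hV'
    exact (hV (mem_coe.2 hi) (mem_coe.2 (hJ hj)) hij).mono (hle i) sdiff_subset

/-- Cost of finding out which position of level at least `l` has the candidate `r`: while `r` can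
still be of that level, all positions of level `l` are determined, at `k` queries each. -/
def searchCost (I : Finset (Fin n)) (V : Fin n → Finset (Fin n)) (ℓ : Fin n → ℕ) (k L l : ℕ)
    (r : Fin n) : ℕ :=
  ∑ l' ∈ Ico l L, if r ∈ deep I V ℓ l' then k * #{i ∈ I | ℓ i = l'} + 1 else 0

lemma searchCost_of_mem_deep {r : Fin n} (hl : l < L) (hr : r ∈ deep I V ℓ l) :
    searchCost I V ℓ k L l r =
      k * #{i ∈ I | ℓ i = l} + 1 + searchCost I V ℓ k L (l + 1) r := by
  rw [searchCost, sum_eq_sum_Ico_succ_bot hl, if_pos hr, searchCost]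

/-- One round of the search: determine the positions of level `l`, then ask whether `π p` is one of
the values that have thereby been freed. -/
lemma Solvable.search_level {f : Secret n → ℕ} (hn : n ≤ 2 ^ k)
    (hV : (Iio p : Set (Fin n)).PairwiseDisjoint V) (hV' : V' ≤ V)
    (hexit : ∀ W ≤ V', ∀ G, (∀ i ∈ Iio p, Disjoint (W i) G) →
      Solvable q {s ∈ candidates (Iio p) W c | s.1 (s.2 p) = xor (c (s.2 p)) b ∧ s.2 p ∈ G} f)
    (hnext : ∀ W ≤ V', Solvable q {s ∈ candidates (Iio p) W c |
      s.1 (s.2 p) = xor (c (s.2 p)) b ∧ s.2 p ∈ deep (Iio p) V ℓ (l + 1)} f) :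
    Solvable q {s ∈ candidates (Iio p) V' c |
        s.1 (s.2 p) = xor (c (s.2 p)) b ∧ s.2 p ∈ deep (Iio p) V ℓ l}
      (fun s => f s + 1 + k * #{i ∈ Iio p | ℓ i = l}) := by
  set J : Finset (Fin n) := {i ∈ Iio p | ℓ i = l}
  have hJ : J ⊆ Iio p := filter_subset _ _
  refine .determine (V := V') hn (by simp [isLowerSet_Iio]) (hV.mono hV') hJ (filter_subset _ _)
    fun v => ?_
  set G : Finset (Fin n) := J.biUnion fun i => V i \ {v i}
  set W := J.piecewise (fun i => V' i ∩ {v i}) V'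
  have hWcand : candidates (Iio p) W c = {s ∈ candidates (Iio p) V' c | ∀ i ∈ J, s.2 i = v i} :=
    candidates_piecewise_inter_singleton hJ v
  have hWV' : W ≤ V' := J.piecewise_le_of_le_of_le (fun _ => inter_subset_left) le_rfl
  have hWG (i) (hi : i ∈ Iio p) : Disjoint (W i) G :=
    disjoint_piecewise_inter_biUnion_sdiff hV hV' hJ hi
  have hearlier (s) (hs : s ∈ candidates (Iio p) W c) (j) (hj : j < p) :=
    mem_candidates.1 hs j (mem_Iio.2 hj)
  rw [filter_comm, ← hWcand]
  refine .ask_mem (G := G) (fun s hs j hj => (hearlier s (mem_filter.1 hs).1 j hj).2)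
    (fun s hs j hj => disjoint_left.1 (hWG j (mem_Iio.2 hj))
      (hearlier s (mem_filter.1 hs).1 j hj).1) (fun s hs => (mem_filter.1 hs).2.1) ?_ ?_
  · convert hexit W hWV' G hWG using 1
    rw [filter_filter]
    refine filter_congr fun s _ => ?_
    rw [and_assoc, and_iff_right_of_imp (a := _ ∈ deep _ _ _ _) (biUnion_sdiff_subset_deep ·)]
  · convert hnext W hWV' using 1
    rw [filter_filter]
    refine filter_congr fun s hs => ?_
    rw [hWcand, mem_filter] at hs
    rw [mem_deep_succ_iff hV (by simp) fun i hi hil => hs.2 i (mem_filter.2 ⟨hi, hil⟩), and_assoc]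

lemma Solvable.search (hn : n ≤ 2 ^ k) (hV : (Iio p : Set (Fin n)).PairwiseDisjoint V)
    (hL : ∀ i ∈ Iio p, L ≤ ℓ i → #(V i) ≤ 1)
    (hexit : ∀ V' ≤ V, ∀ G, (∀ i ∈ Iio p, Disjoint (V' i) G) →
      Solvable q {s ∈ candidates (Iio p) V' c | s.1 (s.2 p) = xor (c (s.2 p)) b ∧ s.2 p ∈ G}
        (fun _ => base))
    (hl : l ≤ L) (hV' : V' ≤ V) :
    Solvable q {s ∈ candidates (Iio p) V' c |
        s.1 (s.2 p) = xor (c (s.2 p)) b ∧ s.2 p ∈ deep (Iio p) V ℓ l}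
      (fun s => base + searchCost (Iio p) V ℓ k L l (s.2 p)) := by
  induction hl using Nat.decreasingInduction generalizing V' with
  | self =>
    convert solvable_empty
    exact filter_eq_empty_iff.2 fun s hs h =>
      notMem_deep_of_card_le_one (by simp) hL (candidates_mono (fun i _ => hV' i) hs) h.2
  | of_succ l hl ih =>
    refine (Solvable.search_level hn hV hV' (fun W hW G hG => ?_)
      fun W hW => ih (hW.trans hV')).mono fun s hs => ?_
    · exact (hexit W (hW.trans hV') G hG).mono fun s _ => Nat.le_add_right _ _
    · rw [searchCost_of_mem_deep hl (mem_filter.1 hs).2.2]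
      lia

lemma Solvable.search_value (hn : n ≤ 2 ^ k) (hV : (Iio p : Set (Fin n)).PairwiseDisjoint V)
    (hL : ∀ i ∈ Iio p, L ≤ ℓ i → #(V i) ≤ 1)
    (hexit : ∀ V' ≤ V, ∀ b, ∀ G, (∀ i ∈ Iio p, Disjoint (V' i) G) →
      Solvable q {s ∈ candidates (Iio p) V' c | s.1 (s.2 p) = xor (c (s.2 p)) b ∧ s.2 p ∈ G}
        (fun _ => base)) :
    Solvable q (candidates (Iio p) V c)
      (fun s => base + searchCost (Iio p) V ℓ k L 0 (s.2 p) + 2) := by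
  have hearlier (s) (hs : s ∈ candidates (Iio p) V c) (j) (hj : j < p) :=
    mem_candidates.1 hs j (mem_Iio.2 hj)
  have hbit (b : Bool) : Solvable q {s ∈ candidates (Iio p) V c | s.1 (s.2 p) = xor (c (s.2 p)) b}
      (fun s => base + searchCost (Iio p) V ℓ k L 0 (s.2 p) + 1) := by
    set G := (deep (Iio p) V ℓ 0)ᶜ with hG
    have hVG (i) (hi : i ∈ Iio p) : Disjoint (V i) G :=
      disjoint_compl_right.mono_left fun r hr => mem_deep.2 ⟨i, hi, Nat.zero_le _, hr⟩
    refine .ask_mem (b := b) (G := G) (fun s hs j hj => (hearlier s (mem_filter.1 hs).1 j hj).2)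
      (fun s hs j hj => disjoint_left.1 (hVG j (mem_Iio.2 hj))
        (hearlier s (mem_filter.1 hs).1 j hj).1) (fun s hs => (mem_filter.1 hs).2) ?_ ?_
    · rw [filter_filter]
      exact (hexit V le_rfl b G hVG).mono fun s _ => Nat.le_add_right _ _
    · simp only [hG, mem_compl, not_not, filter_filter]
      exact .search hn hV hL (fun V' hV' => hexit V' hV' b) (Nat.zero_le L) le_rfl
  refine .ask (fun s hs j hj => (hearlier s hs j hj).2) ?_ ?_
  · simpa only [Bool.xor_false] using hbit false
  · simpa only [Bool.xor_true, Bool.eq_not] using hbit true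

end Search

/-! ### Expected cost of the search -/

section SearchCost

variable {I : Finset (Fin n)} {V : Fin n → Finset (Fin n)} {c : Fin n → Bool} {ℓ : Fin n → ℕ}
  {w : ℕ → ℕ} {p : Fin n} {l L k : ℕ}

lemma sq_mul_sum_level_le (hpos : 0 < w l)
    (hsmall : ∀ i ∈ I, (#(V i) - 1) * w (ℓ i) ^ 3 ≤ n) (hcrowd : #{i ∈ I | ℓ i = l} ≤ w l) :
    w l ^ 2 * ∑ i ∈ I with ℓ i = l, (#(V i) - 1) ≤ n := by
  refine Nat.le_of_mul_le_mul_left ?_ hpos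
  calc w l * (w l ^ 2 * ∑ i ∈ I with ℓ i = l, (#(V i) - 1))
      = ∑ i ∈ I with ℓ i = l, (#(V i) - 1) * w l ^ 3 := by rw [← sum_mul]; ring
    _ ≤ ∑ i ∈ I with ℓ i = l, n := sum_le_sum fun i hi => by
        rw [mem_filter] at hi
        exact hi.2 ▸ hsmall i hi.1
    _ ≤ w l * n := by
        rw [sum_const, smul_eq_mul]
        exact Nat.mul_le_mul_right n hcrowd

lemma sq_mul_sum_deep_le (hw : Monotone w) (hpos : 0 < w 0)
    (hsmall : ∀ i ∈ I, (#(V i) - 1) * w (ℓ i) ^ 3 ≤ n)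
    (hL : ∀ i ∈ I, L ≤ ℓ i → #(V i) ≤ 1) (hcrowd : ∀ l < L, #{i ∈ I | ℓ i = l} ≤ w l) :
    w l ^ 2 * ∑ i ∈ I with l ≤ ℓ i, (#(V i) - 1) ≤ L * n := by
  have hbelow : ∑ i ∈ I with l ≤ ℓ i, (#(V i) - 1) ≤
      ∑ l' ∈ Ico l L, ∑ i ∈ I with ℓ i = l', (#(V i) - 1) := by
    rw [sum_fiberwise_eq_sum_filter]
    refine sum_le_sum_of_ne_zero fun i hi hne => ?_
    simp only [mem_filter, mem_Ico] at hi ⊢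
    refine ⟨hi.1, hi.2, lt_of_not_ge fun hLi => hne ?_⟩
    exact Nat.sub_eq_zero_of_le (hL i hi.1 hLi)
  calc w l ^ 2 * ∑ i ∈ I with l ≤ ℓ i, (#(V i) - 1)
      ≤ w l ^ 2 * ∑ l' ∈ Ico l L, ∑ i ∈ I with ℓ i = l', (#(V i) - 1) :=
        Nat.mul_le_mul_left _ hbelow
    _ = ∑ l' ∈ Ico l L, w l ^ 2 * ∑ i ∈ I with ℓ i = l', (#(V i) - 1) := mul_sum ..
    _ ≤ ∑ _l' ∈ Ico l L, n := sum_le_sum fun l' hl' => by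
        rw [mem_Ico] at hl'
        refine le_trans (Nat.mul_le_mul_right _ (Nat.pow_le_pow_left (hw hl'.1) 2)) ?_
        exact sq_mul_sum_level_le (hpos.trans_le (hw (Nat.zero_le l'))) hsmall (hcrowd l' hl'.2)
    _ ≤ L * n := by
        rw [sum_const, Nat.card_Ico, smul_eq_mul]
        exact Nat.mul_le_mul_right n (Nat.sub_le L l)

lemma mul_card_filter_next_mem_deep_le (hp : p ∉ I) :
    (n - #I) * #{s ∈ candidates I V c | s.2 p ∈ deep I V ℓ l} ≤
      (∑ i ∈ I with l ≤ ℓ i, (#(V i) - 1)) * #(candidates I V c) := by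
  have hunion : {s ∈ candidates I V c | s.2 p ∈ deep I V ℓ l} =
      {i ∈ I | l ≤ ℓ i}.biUnion fun i => {s ∈ candidates I V c | s.2 p ∈ V i} := by
    ext s
    simp only [mem_filter, mem_biUnion, mem_deep]
    tauto
  rw [hunion, sum_mul]
  refine (Nat.mul_le_mul_left _ card_biUnion_le).trans ?_
  rw [mul_sum]
  exact sum_le_sum fun i hi => mul_card_filter_next_mem_le hp (mem_filter.1 hi).1

lemma sq_mul_card_filter_next_mem_deep_le (hw : Monotone w) (hpos : 0 < w 0)
    (hsmall : ∀ i ∈ I, (#(V i) - 1) * w (ℓ i) ^ 3 ≤ n)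
    (hL : ∀ i ∈ I, L ≤ ℓ i → #(V i) ≤ 1) (hcrowd : ∀ l < L, #{i ∈ I | ℓ i = l} ≤ w l)
    (hp : p ∉ I) (hk : n ≤ k * (n - #I)) :
    w l ^ 2 * #{s ∈ candidates I V c | s.2 p ∈ deep I V ℓ l} ≤ L * k * #(candidates I V c) := by
  have hfree : 0 < n - #I := Nat.pos_of_mul_pos_left (p.pos.trans_le hk)
  refine Nat.le_of_mul_le_mul_left ?_ hfree
  calc (n - #I) * (w l ^ 2 * #{s ∈ candidates I V c | s.2 p ∈ deep I V ℓ l})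
      = w l ^ 2 * ((n - #I) * #{s ∈ candidates I V c | s.2 p ∈ deep I V ℓ l}) := by ring
    _ ≤ w l ^ 2 * ((∑ i ∈ I with l ≤ ℓ i, (#(V i) - 1)) * #(candidates I V c)) :=
        Nat.mul_le_mul_left _ (mul_card_filter_next_mem_deep_le hp)
    _ = (w l ^ 2 * ∑ i ∈ I with l ≤ ℓ i, (#(V i) - 1)) * #(candidates I V c) := by ring
    _ ≤ (L * n) * #(candidates I V c) :=
        Nat.mul_le_mul_right _ (sq_mul_sum_deep_le hw hpos hsmall hL hcrowd)
    _ ≤ (L * (k * (n - #I))) * #(candidates I V c) :=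
        Nat.mul_le_mul_right _ (Nat.mul_le_mul_left L hk)
    _ = (n - #I) * (L * k * #(candidates I V c)) := by ring

/-- The next value is a candidate of a position of level at least `l` with probability at most
`L * k / w l ^ 2`. -/
lemma sum_searchCost_le (hw : Monotone w) (hpos : 0 < w 0)
    (hsmall : ∀ i ∈ I, (#(V i) - 1) * w (ℓ i) ^ 3 ≤ n)
    (hL : ∀ i ∈ I, L ≤ ℓ i → #(V i) ≤ 1) (hcrowd : ∀ l < L, #{i ∈ I | ℓ i = l} ≤ w l)
    (hp : p ∉ I) (hk : n ≤ k * (n - #I)) (hlarge : 2 * k ^ 2 * L ^ 2 ≤ w 0) :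
    ∑ s ∈ candidates I V c, searchCost I V ℓ k L 0 (s.2 p) ≤ #(candidates I V c) := by
  set N : ℕ → ℕ := fun l => #{s ∈ candidates I V c | s.2 p ∈ deep I V ℓ l}
  have hk_pos : 0 < k := Nat.pos_of_mul_pos_right (p.pos.trans_le hk)
  have hlevel (l) (hl : l ∈ Ico 0 L) :
      w 0 * (N l * (k * #{i ∈ I | ℓ i = l} + 1)) ≤ 2 * k ^ 2 * L * #(candidates I V c) := by
    have hwl : w 0 ≤ w l := hw (Nat.zero_le l)
    have hround : k * #{i ∈ I | ℓ i = l} + 1 ≤ 2 * k * w l := by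
      have hone : 1 ≤ k * w l := Nat.mul_pos hk_pos (hpos.trans_le hwl)
      have := Nat.mul_le_mul_left k (hcrowd l (mem_Ico.1 hl).2)
      lia
    calc w 0 * (N l * (k * #{i ∈ I | ℓ i = l} + 1)) ≤ w l * (N l * (2 * k * w l)) := by gcongr
      _ = 2 * k * (w l ^ 2 * N l) := by ring
      _ ≤ 2 * k * (L * k * #(candidates I V c)) := Nat.mul_le_mul_left _
          (sq_mul_card_filter_next_mem_deep_le hw hpos hsmall hL hcrowd hp hk)
      _ = 2 * k ^ 2 * L * #(candidates I V c) := by ring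
  refine Nat.le_of_mul_le_mul_left ?_ hpos
  calc w 0 * ∑ s ∈ candidates I V c, searchCost I V ℓ k L 0 (s.2 p)
      = ∑ l ∈ Ico 0 L, w 0 * (N l * (k * #{i ∈ I | ℓ i = l} + 1)) := by
        simp only [searchCost]
        rw [sum_comm, mul_sum]
        simp only [← sum_filter, sum_const, smul_eq_mul, N]
    _ ≤ ∑ _l ∈ Ico 0 L, 2 * k ^ 2 * L * #(candidates I V c) := sum_le_sum hlevel
    _ = 2 * k ^ 2 * L ^ 2 * #(candidates I V c) := by
        rw [sum_const, Nat.card_Ico, smul_eq_mul, Nat.sub_zero]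
        ring
    _ ≤ w 0 * #(candidates I V c) := Nat.mul_le_mul_right _ hlarge

end SearchCost

/-! ### Levels and potential -/

section Potential

variable {I : Finset (Fin n)} {V V' : Fin n → Finset (Fin n)} {w : ℕ → ℕ} {l L v v' : ℕ}

/-- A sequence of block sizes `w 0, …, w L` that grows at most like `w (l + 1) = w l ^ (4 / 3)` and
ends above the cube root of `n`. -/
structure IsScale (n : ℕ) (w : ℕ → ℕ) (L : ℕ) : Prop where
  pos : 0 < w 0
  mono : Monotone w
  step : ∀ l, w (l + 1) ^ 3 ≤ w l ^ 4
  le_cube : n ≤ w L ^ 3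

/-- The level of a candidate set of size `v`: the greatest `l ≤ L` with `(v - 1) * w l ^ 3 < n`. -/
def level (n : ℕ) (w : ℕ → ℕ) (L v : ℕ) : ℕ :=
  Nat.findGreatest (fun l => (v - 1) * w l ^ 3 < n) L

lemma le_level (hl : l ≤ L) (h : (v - 1) * w l ^ 3 < n) : l ≤ level n w L v :=
  Nat.le_findGreatest hl h

lemma mul_cube_level_lt (h : (v - 1) * w 0 ^ 3 < n) : (v - 1) * w (level n w L v) ^ 3 < n :=
  Nat.findGreatest_spec (P := fun l => (v - 1) * w l ^ 3 < n) (Nat.zero_le L) h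

lemma level_anti (h : v' ≤ v) : level n w L v ≤ level n w L v' :=
  Nat.findGreatest_mono_left
    (fun _ hl => (Nat.mul_le_mul_right _ (Nat.sub_le_sub_right h 1)).trans_lt hl) L

lemma one_lt_of_level_lt (hn : 0 < n) (h : level n w L v < L) : 1 < v := by
  by_contra! hv
  exact h.not_ge (le_level le_rfl (by simpa [Nat.sub_eq_zero_of_le hv]))

lemma IsScale.le_one_of_le_level (hw : IsScale n w L) (h : (v - 1) * w 0 ^ 3 < n)
    (hL : L ≤ level n w L v) : v ≤ 1 := by
  have hlt := mul_cube_level_lt (L := L) h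
  rw [hL.antisymm' (Nat.findGreatest_le L)] at hlt
  have := Nat.lt_of_mul_lt_mul_right (hlt.trans_le (hw.le_cube.trans_eq (one_mul _).symm))
  lia

lemma IsScale.lt_level (hw : IsScale n w L) (h : (v - 1) * w 0 ^ 3 < n) (hl : level n w L v < L)
    (hv' : (v' - 1) * w (level n w L v) ≤ v - 1) : level n w L v < level n w L v' := by
  refine le_level hl (lt_of_le_of_lt ?_ (mul_cube_level_lt (L := L) h))
  set l := level n w L v
  calc (v' - 1) * w (l + 1) ^ 3 ≤ (v' - 1) * w l ^ 4 := Nat.mul_le_mul_left _ (hw.step l)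
    _ = (v' - 1) * w l * w l ^ 3 := by ring
    _ ≤ (v - 1) * w l ^ 3 := Nat.mul_le_mul_right _ hv'

/-- The candidate sets of different positions are disjoint, and none is too large to have a
level. -/
structure Admissible (w : ℕ → ℕ) (I : Finset (Fin n)) (V : Fin n → Finset (Fin n)) : Prop where
  disjoint : (I : Set (Fin n)).PairwiseDisjoint V
  lt : ∀ i ∈ I, (#(V i) - 1) * w 0 ^ 3 < n

lemma Admissible.anti (h : Admissible w I V) (hV' : V' ≤ V) : Admissible w I V' where
  disjoint := h.disjoint.mono hV'
  lt i hi := (Nat.mul_le_mul_right _ (Nat.sub_le_sub_right (card_le_card (hV' i)) 1)).trans_lt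
    (h.lt i hi)

lemma Admissible.insert_update (h : Admissible w I V) {p : Fin n} (hp : p ∉ I)
    {G : Finset (Fin n)} (hG : ∀ i ∈ I, Disjoint (V i) G) (hcard : (#G - 1) * w 0 ^ 3 < n) :
    Admissible w (insert p I) (Function.update V p G) where
  disjoint := by
    have hne (i) (hi : i ∈ I) : Function.update V p G i = V i :=
      Function.update_of_ne (ne_of_mem_of_not_mem hi hp) _ _
    rw [coe_insert, Set.pairwiseDisjoint_insert_of_notMem hp]
    refine ⟨fun i hi j hj hij => ?_, fun i hi => ?_⟩
    · simpa only [Function.onFun, hne i hi, hne j hj] using h.disjoint hi hj hij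
    · simpa only [Function.update_self, hne i hi] using (hG i hi).symm
  lt i hi := by
    obtain rfl | hip := eq_or_ne i p
    · rwa [Function.update_self]
    · rw [Function.update_of_ne hip]
      exact h.lt i (mem_of_mem_insert_of_ne hi hip)

/-- Each position can still be raised by `L - level` levels, and pays two queries for each. -/
def potential (w : ℕ → ℕ) (L : ℕ) (I : Finset (Fin n)) (V : Fin n → Finset (Fin n)) : ℕ :=
  ∑ i ∈ I, 2 * (L - level n w L #(V i))

lemma potential_summand_mono {A B : Finset (Fin n)} (h : A ⊆ B) :
    2 * (L - level n w L #A) ≤ 2 * (L - level n w L #B) :=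
  Nat.mul_le_mul_left 2 (Nat.sub_le_sub_left (level_anti (card_le_card h)) L)

lemma potential_mono (h : ∀ i ∈ I, V' i ⊆ V i) : potential w L I V' ≤ potential w L I V :=
  sum_le_sum fun i hi => potential_summand_mono (h i hi)

lemma potential_add_two_le (h : V' ≤ V) {k : Fin n} (hk : k ∈ I)
    (hlt : level n w L #(V k) < level n w L #(V' k)) :
    potential w L I V' + 2 ≤ potential w L I V := by
  have hrest : ∑ i ∈ I.erase k, 2 * (L - level n w L #(V' i)) ≤
      ∑ i ∈ I.erase k, 2 * (L - level n w L #(V i)) :=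
    sum_le_sum fun i _ => potential_summand_mono (h i)
  have hle : level n w L #(V' k) ≤ L := Nat.findGreatest_le L
  rw [potential, potential, ← add_sum_erase I _ hk, ← add_sum_erase I _ hk]
  lia

lemma potential_insert_update_le {p : Fin n} (hp : p ∉ I) (h : V' ≤ V) (G : Finset (Fin n)) :
    potential w L (insert p I) (Function.update V' p G) ≤ potential w L I V + 2 * L := by
  have hrest : ∀ i ∈ I, Function.update V' p G i ⊆ V i := fun i hi => by
    rw [Function.update_of_ne (ne_of_mem_of_not_mem hi hp)]
    exact h i
  rw [potential, sum_insert hp, add_comm]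
  exact Nat.add_le_add (potential_mono hrest) (Nat.mul_le_mul_left 2 (Nat.sub_le _ _))

end Potential

/-! ### Raising levels -/

section Block

variable {I J : Finset (Fin n)} {V F : Fin n → Finset (Fin n)} {c : Fin n → Bool} {w : ℕ → ℕ}
  {l L K : ℕ}

/-- The query is paid for by averaging: a hit saves two queries, and a miss, which saves nothing,
has probability at most one half. -/
lemma Solvable.split_block (hI : IsLowerSet (I : Set (Fin n)))
    (hV : (I : Set (Fin n)).PairwiseDisjoint V) (hJ : J ⊆ I) (hne : J.Nonempty)
    (hF : ∀ i ∈ J, F i ⊆ V i) (hm : ∀ i ∈ J, #(V i) ≤ #J * #(F i))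
    (hnone : Solvable q (candidates I (J.piecewise (fun i => V i \ F i) V) c) (fun _ => K + 2))
    (hhit : ∀ k ∈ J, Solvable q (candidates I (hit V F J k) c) (fun _ => K)) :
    Solvable q (candidates I V c) (fun _ => K + 2) := by
  set N := candidates I (J.piecewise (fun i => V i \ F i) V) c
  have hNV : N ⊆ candidates I V c :=
    fun s hs => ((mem_candidates_piecewise_sdiff hJ).1 hs).1
  have hN : 2 * #N ≤ #(candidates I V c) := two_mul_card_piecewise_sdiff_le hV hJ hne hF hm
  refine (Solvable.split (f := fun s => K + if s ∈ N then 2 else 0) hI hV hJ hF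
    (hnone.mono fun s hs => by rw [if_pos hs])
    fun k hk => (hhit k hk).mono fun s _ => Nat.le_add_right _ _).of_sum_le ?_
  simp only [sum_add_distrib, sum_const, smul_eq_mul, ← sum_filter, filter_mem_eq_inter,
    inter_eq_right.2 hNV]
  lia

lemma exists_subset_card_le_mul (A : Finset (Fin n)) {m : ℕ} (hm : 0 < m) :
    ∃ B ⊆ A, #A ≤ m * #B ∧ (#B - 1) * m ≤ #A - 1 := by
  obtain hA | hA := (#A).eq_zero_or_pos
  · exact ⟨∅, empty_subset A, by simp [hA], by simp⟩
  have hdiv : (#A - 1) / m * m ≤ #A - 1 := Nat.div_mul_le_self _ _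
  have hlt : #A - 1 < ((#A - 1) / m + 1) * m := Nat.lt_mul_of_div_lt (Nat.lt_succ_self _) hm
  obtain ⟨B, hBA, hB⟩ := exists_subset_card_eq
    (show (#A - 1) / m + 1 ≤ #A by have := Nat.div_le_self (#A - 1) m; lia)
  exact ⟨B, hBA, by rw [hB, mul_comm]; lia, by rwa [hB, Nat.add_sub_cancel]⟩

lemma hit_le (hF : ∀ i, F i ⊆ V i) (k : Fin n) : hit V F J k ≤ V :=
  update_le_iff.2 ⟨hF k, fun i _ =>
    Finset.piecewise_le_of_le_of_le _ (fun _ => sdiff_subset) le_rfl i⟩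

lemma piecewise_sdiff_lt (hF : ∀ i, F i ⊆ V i) {k : Fin n} (hk : k ∈ J) (hne : (F k).Nonempty) :
    J.piecewise (fun i => V i \ F i) V < V := by
  refine Pi.lt_def.2 ⟨J.piecewise_le_of_le_of_le (fun _ => sdiff_subset) le_rfl, k, ?_⟩
  rw [piecewise_eq_of_mem _ _ _ hk]
  exact sdiff_ssubset (hF k) hne

lemma potential_hit_add_two_le (hw : IsScale n w L) (hV : Admissible w I V) (hF : ∀ i, F i ⊆ V i)
    {k : Fin n} (hk : k ∈ I) (hl : level n w L #(V k) < L)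
    (hfrac : (#(F k) - 1) * w (level n w L #(V k)) ≤ #(V k) - 1) :
    potential w L I (hit V F J k) + 2 ≤ potential w L I V := by
  refine potential_add_two_le (hit_le hF k) hk ?_
  rw [hit, Function.update_self]
  exact hw.lt_level (hV.lt k hk) hl hfrac

lemma Solvable.raise_level (hw : IsScale n w L) (hI : IsLowerSet (I : Set (Fin n)))
    (hV : Admissible w I V) (hl : l < L) (hcrowd : w l ≤ #{i ∈ I | level n w L #(V i) = l})
    (ih : ∀ V' < V, Solvable q (candidates I V' c) (fun _ => K + potential w L I V')) :
    Solvable q (candidates I V c) (fun _ => K + potential w L I V) := by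
  have hwl : 0 < w l := hw.pos.trans_le (hw.mono (Nat.zero_le l))
  obtain ⟨J, hJsub, hJcard⟩ := exists_subset_card_eq hcrowd
  have hJ : J ⊆ I := hJsub.trans (filter_subset _ _)
  have hlevel (i) (hi : i ∈ J) : level n w L #(V i) = l := (mem_filter.1 (hJsub hi)).2
  obtain ⟨k₀, hk₀⟩ : J.Nonempty := card_pos.1 (hJcard ▸ hwl)
  choose F hF hmul hfrac using fun i => exists_subset_card_le_mul (V i) hwl
  have hhit (k) (hk : k ∈ J) :
      potential w L I (hit V F J k) + 2 ≤ potential w L I V :=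
    potential_hit_add_two_le hw hV hF (hJ hk) ((hlevel k hk).trans_lt hl) (hlevel k hk ▸ hfrac k)
  obtain ⟨P, hP⟩ : ∃ P, K + potential w L I V = P + 2 :=
    Nat.exists_eq_add_of_le' (by have := hhit k₀ hk₀; lia)
  rw [hP]
  refine .split_block hI hV.disjoint hJ ⟨k₀, hk₀⟩ (fun i _ => hF i) (fun i _ => hJcard ▸ hmul i)
    ?_ fun k hk => ?_
  · have hlarge : 1 < #(V k₀) := one_lt_of_level_lt k₀.pos ((hlevel k₀ hk₀).trans_lt hl)
    have hFk₀ : 0 < #(F k₀) := Nat.pos_of_mul_pos_left (pos_of_gt (hlarge.trans_le (hmul k₀)))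
    have hlt : J.piecewise (fun i => V i \ F i) V < V :=
      piecewise_sdiff_lt hF hk₀ (card_pos.1 hFk₀)
    refine (ih _ hlt).mono fun _ _ => ?_
    rw [← hP]
    exact Nat.add_le_add_left (potential_mono fun i _ => hlt.le i) K
  · have hdrop := hhit k hk
    refine (ih _ ((hit_le hF k).lt_of_ne fun h => ?_)).mono fun _ _ => by lia
    rw [h] at hdrop
    lia

lemma Solvable.of_uncrowded (hw : IsScale n w L) (hI : IsLowerSet (I : Set (Fin n)))
    (hV : Admissible w I V)
    (h : ∀ V' ≤ V, (∀ l < L, #{i ∈ I | level n w L #(V' i) = l} < w l) →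
      Solvable q (candidates I V' c) (fun _ => K + potential w L I V')) :
    Solvable q (candidates I V c) (fun _ => K + potential w L I V) := by
  induction V using WellFoundedLT.induction with
  | ind V ih =>
    by_cases huncrowded : ∀ l < L, #{i ∈ I | level n w L #(V i) = l} < w l
    · exact h V le_rfl huncrowded
    · push Not at huncrowded
      obtain ⟨l, hl, hcrowd⟩ := huncrowded
      exact .raise_level hw hI hV hl hcrowd fun V' hV' =>
        ih V' hV' (hV.anti hV'.le) fun V'' hV'' => h V'' (hV''.trans hV'.le)

end Block

/-! ### The induction over the positions -/

section Main

variable {I : Finset (Fin n)} {V : Fin n → Finset (Fin n)} {c : Fin n → Bool} {w : ℕ → ℕ}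
  {L k m : ℕ}

lemma card_filter_one_lt_le (hw : IsScale n w L) (hV : Admissible w I V)
    (huncrowded : ∀ l < L, #{i ∈ I | level n w L #(V i) = l} < w l) :
    #{i ∈ I | 1 < #(V i)} ≤ ∑ l ∈ range L, w l := by
  have hmaps : Set.MapsTo (fun i => level n w L #(V i)) ({i ∈ I | 1 < #(V i)} : Finset (Fin n))
      (range L) := fun i hi => by
    obtain ⟨hiI, hlarge⟩ := mem_filter.1 hi
    exact mem_coe.2 (mem_range.2 (lt_of_not_ge fun hL =>
      hlarge.not_ge (hw.le_one_of_le_level (hV.lt i hiI) hL)))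
  rw [card_eq_sum_card_fiberwise hmaps]
  refine sum_le_sum fun l hl => le_trans (card_le_card ?_) (huncrowded l (mem_range.1 hl)).le
  exact filter_subset_filter _ (filter_subset _ _)

lemma Solvable.finish (hn : n ≤ 2 ^ k) (hI : IsLowerSet (I : Set (Fin n)))
    (hV : (I : Set (Fin n)).PairwiseDisjoint V) (hq : ∀ j : Fin n, (j : ℕ) < q → j ∈ I)
    (hm : #{i ∈ I | 1 < #(V i)} ≤ m) :
    Solvable q (candidates I V c) (fun _ => k * m) := by
  refine (Solvable.determine (f := fun _ => 0) hn hI hV (filter_subset _ _) subset_rfl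
    fun v => solvable_of_agree fun s hs s' hs' j hj => ?_).mono
    fun _ _ => (zero_add _).trans_le (Nat.mul_le_mul_left k hm)
  obtain ⟨hcand, hval⟩ := mem_filter.1 hs
  obtain ⟨hcand', hval'⟩ := mem_filter.1 hs'
  have hj := mem_candidates.1 hcand j (hq j hj)
  have hj' := mem_candidates.1 hcand' j (hq j ‹_›)
  have hperm : s'.2 j = s.2 j := by
    by_cases hlarge : 1 < #(V j)
    · rw [hval j (mem_filter.2 ⟨hq j ‹_›, hlarge⟩), hval' j (mem_filter.2 ⟨hq j ‹_›, hlarge⟩)]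
    · exact card_le_one.1 (not_lt.1 hlarge) _ hj'.1 _ hj.1
  exact ⟨hperm, by rw [hj.2, ← hperm, hj'.2]⟩

lemma solvable_insert_of_bisect {p : Fin n} {G : Finset (Fin n)} {f : Secret n → ℕ}
    (hm : w 0 ^ 3 ≤ 2 ^ m) (hV : Admissible w (Iio p) V) (hG : ∀ i ∈ Iio p, Disjoint (V i) G)
    (h : ∀ W, Admissible w (insert p (Iio p)) (Function.update V p W) →
      Solvable q (candidates (insert p (Iio p)) (Function.update V p W) c) f) :
    Solvable q (candidates (insert p (Iio p)) (Function.update V p G) c) (fun s => f s + m) := by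
  have hp : p ∉ Iio p := by simp
  refine .bisect (i := p) (A := G) (fun s hs j hj => (mem_candidates.1 hs j ?_).2)
    (fun s hs j hj => ?_) (fun s hs => ?_) fun W hWG hW => ?_
  · simpa [le_iff_eq_or_lt] using hj
  · have hmem := (mem_candidates.1 hs j (mem_insert_of_mem (mem_Iio.2 hj))).1
    rw [Function.update_of_ne hj.ne] at hmem
    exact disjoint_left.1 (hG j (mem_Iio.2 hj)) hmem
  · simpa using (mem_candidates.1 hs p (mem_insert_self p _)).1
  · have hWcard : (#W - 1) * w 0 ^ 3 < n := by
      have := card_finset_fin_le G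
      have := p.pos
      exact (Nat.mul_le_mul_left _ hm).trans_lt (hW.trans_lt (by lia))
    rw [← candidates_update (mem_insert_self p _) (by rwa [Function.update_self]),
      Function.update_idem]
    exact h W (hV.insert_update hp (fun i hi => (hG i hi).mono_right hWG) hWcard)

/-- The positions before `t`. -/
def initial (n t : ℕ) : Finset (Fin n) := {i | (i : ℕ) < t}

lemma initial_val (p : Fin n) : initial n p = Iio p := by
  ext i
  simp [initial]

lemma initial_succ (p : Fin n) : initial n (p + 1) = insert p (Iio p) := by
  ext i
  simp [initial, le_iff_eq_or_lt, Fin.ext_iff]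

lemma isLowerSet_initial (t : ℕ) : IsLowerSet (initial n t : Set (Fin n)) := fun i j hji hi => by
  simp only [initial, coe_filter_univ, Set.mem_ofPred_eq] at hi ⊢
  exact lt_of_le_of_lt hji hi

lemma Solvable.extend {p : Fin n} {K : ℕ} (hw : IsScale n w L) (hm : w 0 ^ 3 ≤ 2 ^ m)
    (hn : n ≤ 2 ^ k) (hk : n ≤ k * (n - p)) (hlarge : 2 * k ^ 2 * L ^ 2 ≤ w 0)
    (hV : Admissible w (Iio p) V)
    (huncrowded : ∀ l < L, #{i ∈ Iio p | level n w L #(V i) = l} < w l)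
    (ih : ∀ V' c', Admissible w (insert p (Iio p)) V' →
      Solvable q (candidates (insert p (Iio p)) V' c')
        (fun _ => K + potential w L (insert p (Iio p)) V')) :
    Solvable q (candidates (Iio p) V c)
      (fun _ => K + (3 + m + 2 * L) + potential w L (Iio p) V) := by
  have hp : p ∉ Iio p := by simp
  have hL (i) (hi : i ∈ Iio p) : L ≤ level n w L #(V i) → #(V i) ≤ 1 :=
    hw.le_one_of_le_level (hV.lt i hi)
  have hexit : ∀ V' ≤ V, ∀ b, ∀ G, (∀ i ∈ Iio p, Disjoint (V' i) G) →
      Solvable q {s ∈ candidates (Iio p) V' c | s.1 (s.2 p) = xor (c (s.2 p)) b ∧ s.2 p ∈ G}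
        (fun _ => K + (potential w L (Iio p) V + 2 * L) + m) := by
    intro V' hV' b G hG
    rw [← candidates_insert hp hG b]
    refine solvable_insert_of_bisect hm (hV.anti hV') hG fun W hW => ?_
    exact (ih _ _ hW).mono fun _ _ =>
      Nat.add_le_add_left (potential_insert_update_le hp hV' W) K
  refine (Solvable.search_value hn hV.disjoint hL hexit).of_sum_le ?_
  have hcost : ∑ s ∈ candidates (Iio p) V c,
      searchCost (Iio p) V (fun i => level n w L #(V i)) k L 0 (s.2 p) ≤
        #(candidates (Iio p) V c) :=
    sum_searchCost_le hw.mono hw.pos (fun i hi => (mul_cube_level_lt (hV.lt i hi)).le) hL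
      (fun l hl => (huncrowded l hl).le) hp (by simpa using hk) hlarge
  simp only [sum_add_distrib, sum_const, smul_eq_mul]
  lia

lemma solvable_candidates_initial (hw : IsScale n w L) (hm : w 0 ^ 3 ≤ 2 ^ m) (hn : n ≤ 2 ^ k)
    (hq : q ≤ n) (hk : n ≤ k * (n - q)) (hlarge : 2 * k ^ 2 * L ^ 2 ≤ w 0) {t d : ℕ}
    (htd : t + d = q) (hV : Admissible w (initial n t) V) :
    Solvable q (candidates (initial n t) V c) (fun _ =>
      (3 + m + 2 * L) * d + k * ∑ l ∈ range L, w l + potential w L (initial n t) V) := by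
  induction d generalizing t V c with
  | zero =>
    refine .of_uncrowded hw (isLowerSet_initial t) hV fun V' hV' huncrowded => ?_
    refine (Solvable.finish hn (isLowerSet_initial t) (hV.anti hV').disjoint
      (fun j hj => by simpa [initial] using hj.trans_eq htd.symm)
      (card_filter_one_lt_le hw (hV.anti hV') huncrowded)).mono fun _ _ => by lia
  | succ d ih =>
    let p : Fin n := ⟨t, by lia⟩
    have hp : initial n t = Iio p := initial_val p
    refine .of_uncrowded hw (isLowerSet_initial t) hV fun V' hV' huncrowded => ?_
    have hextend := Solvable.extend (p := p) (V := V') (c := c) hw hm hn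
      (hk.trans (Nat.mul_le_mul_left k (by simp only [p]; lia))) hlarge (hp ▸ hV.anti hV')
      (hp ▸ huncrowded) fun V'' c' hV'' => by
        rw [← initial_succ p] at hV'' ⊢
        exact ih (by simp only [p]; lia) hV''
    rw [← hp] at hextend
    refine hextend.mono fun _ _ => ?_
    have := potential_mono (w := w) (L := L) (I := initial n t) fun i _ => hV' i
    lia

lemma solvable_univ (hw : IsScale n w L) (hm : w 0 ^ 3 ≤ 2 ^ m) (hn : n ≤ 2 ^ k)
    (hq : q ≤ n) (hk : n ≤ k * (n - q)) (hlarge : 2 * k ^ 2 * L ^ 2 ≤ w 0) :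
    Solvable q (univ : Finset (Secret n))
      (fun _ => (3 + m + 2 * L) * q + k * ∑ l ∈ range L, w l) := by
  have hadm : Admissible w (initial n 0) fun _ => ∅ := ⟨by simp [initial], by simp [initial]⟩
  have h := solvable_candidates_initial (c := fun _ => false) hw hm hn hq hk hlarge
    (zero_add q) hadm
  simpa [candidates, potential, initial] using h

end Main

/-! ### Choice of the parameters -/

section Parameters

variable {a k κ L : ℕ}

/-- The exponents of the block sizes `2 ^ scaleExp a l`, growing by a factor of about `4 / 3`. -/
def scaleExp (a : ℕ) : ℕ → ℕ
  | 0 => a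
  | l + 1 => scaleExp a l + scaleExp a l / 3

lemma monotone_scaleExp : Monotone (scaleExp a) :=
  monotone_nat_of_le_succ fun _ => Nat.le_add_right _ _

lemma two_mul_scaleExp_le (ha : 9 ≤ a) (l : ℕ) : 2 * scaleExp a l ≤ scaleExp a (l + 4) := by
  have hl : 9 ≤ scaleExp a l := ha.trans (monotone_scaleExp (Nat.zero_le l))
  simp only [scaleExp]
  lia

lemma two_pow_mul_le_scaleExp (ha : 9 ≤ a) (j : ℕ) : 2 ^ j * a ≤ scaleExp a (4 * j) := by
  induction j with
  | zero => simp [scaleExp]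
  | succ j ih =>
    have := two_mul_scaleExp_le ha (4 * j)
    rw [mul_add_one, pow_succ]
    lia

lemma exists_isScale (ha : 9 ≤ a) (hn : n ≤ 2 ^ k) (hk : k ≤ 2 ^ κ) :
    ∃ L ≤ 4 * κ, IsScale n (fun l => 2 ^ scaleExp a l) L ∧ ∀ l < L, 3 * scaleExp a l < k := by
  have hlast : k ≤ 3 * scaleExp a (4 * κ) := by
    have hpow := two_pow_mul_le_scaleExp ha κ
    have hle : 2 ^ κ * 1 ≤ 2 ^ κ * a := Nat.mul_le_mul_left _ (by lia)
    lia
  have hex : ∃ l, k ≤ 3 * scaleExp a l := ⟨_, hlast⟩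
  refine ⟨Nat.find hex, Nat.find_min' hex hlast, ⟨by positivity, ?_, fun l => ?_, ?_⟩,
    fun l hl => not_le.1 (Nat.find_min hex hl)⟩
  · exact (pow_right_mono₀ one_le_two).comp monotone_scaleExp
  · rw [← pow_mul, ← pow_mul]
    exact Nat.pow_le_pow_right two_pos (by simp only [scaleExp]; lia)
  · rw [← pow_mul]
    exact hn.trans (Nat.pow_le_pow_right two_pos (by have := Nat.find_spec hex; lia))

lemma mul_sum_two_pow_scaleExp_le (hL : L ≤ 4 * κ) (hsmall : ∀ l < L, 3 * scaleExp a l < k) :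
    k * ∑ l ∈ range L, 2 ^ scaleExp a l ≤ 8 * κ * 2 ^ k := by
  have hsum : ∑ l ∈ range L, 2 ^ scaleExp a l ≤ 4 * κ * 2 ^ (k / 3) :=
    calc ∑ l ∈ range L, 2 ^ scaleExp a l ≤ ∑ _l ∈ range L, 2 ^ (k / 3) :=
          sum_le_sum fun l hl => Nat.pow_le_pow_right two_pos
            (by have := hsmall l (mem_range.1 hl); lia)
      _ = L * 2 ^ (k / 3) := by rw [sum_const, card_range, smul_eq_mul]
      _ ≤ 4 * κ * 2 ^ (k / 3) := Nat.mul_le_mul_right _ hL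
  have hk : k ≤ 2 * 2 ^ (k - k / 3) := by
    have : k - k / 3 < 2 ^ (k - k / 3) := Nat.lt_two_pow_self
    lia
  calc k * ∑ l ∈ range L, 2 ^ scaleExp a l
      ≤ 2 * 2 ^ (k - k / 3) * (4 * κ * 2 ^ (k / 3)) := Nat.mul_le_mul hk hsum
    _ = 8 * κ * 2 ^ (k - k / 3 + k / 3) := by ring
    _ = 8 * κ * 2 ^ k := by rw [Nat.sub_add_cancel (Nat.div_le_self k 3)]

lemma two_pow_clog_le_two_mul (hn : 1 < n) : 2 ^ Nat.clog 2 n ≤ 2 * n := by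
  obtain ⟨j, hj⟩ := Nat.exists_eq_succ_of_ne_zero (Nat.clog_pos one_lt_two hn).ne'
  have hlt := Nat.pow_pred_clog_lt_self one_lt_two hn
  rw [hj, Nat.pred_succ] at hlt
  rw [hj, pow_succ']
  lia

lemma two_mul_sq_mul_sq_le (hκ : κ ≤ k) (hk : k ≤ 2 ^ κ) (hL : L ≤ 4 * κ) :
    2 * k ^ 2 * L ^ 2 ≤ 2 ^ (4 * κ + 5) :=
  calc 2 * k ^ 2 * L ^ 2 ≤ 2 * k ^ 2 * (4 * k) ^ 2 := by gcongr; lia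
    _ = k ^ 4 * 32 := by ring
    _ ≤ (2 ^ κ) ^ 4 * 32 := by gcongr
    _ = 2 ^ (4 * κ + 5) := by ring

lemma solvable_univ_of_clog (hn : 4 ≤ n) (hq : q ≤ n) (hk : n ≤ Nat.clog 2 n * (n - q)) :
    Solvable q (univ : Finset (Secret n)) (fun _ => 54 * Nat.clog 2 (Nat.clog 2 n) * n) := by
  set k := Nat.clog 2 n
  set κ := Nat.clog 2 k
  have hk_two : 2 ≤ k := (Nat.lt_clog_iff_pow_lt one_lt_two).2 (by lia)
  have hκ_pos : 0 < κ := Nat.clog_pos one_lt_two hk_two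
  have hkκ : k ≤ 2 ^ κ := Nat.le_pow_clog one_lt_two k
  have hnk : n ≤ 2 ^ k := Nat.le_pow_clog one_lt_two n
  obtain ⟨L, hL, hw, hsmall⟩ := exists_isScale (a := 4 * κ + 5) (by lia) hnk hkκ
  have hlarge : 2 * k ^ 2 * L ^ 2 ≤ 2 ^ (4 * κ + 5) :=
    two_mul_sq_mul_sq_le (Nat.clog_le_of_le_pow Nat.lt_two_pow_self.le) hkκ hL
  refine (solvable_univ (m := 3 * (4 * κ + 5)) hw (pow_mul' _ _ _).ge hnk hq hk hlarge).mono
    fun _ _ => ?_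
  calc (3 + 3 * (4 * κ + 5) + 2 * L) * q + k * ∑ l ∈ range L, 2 ^ scaleExp (4 * κ + 5) l
      ≤ 38 * κ * n + 8 * κ * (2 * n) := by
        refine Nat.add_le_add (Nat.mul_le_mul (by lia) hq) ?_
        exact (mul_sum_two_pow_scaleExp_le hL hsmall).trans
          (Nat.mul_le_mul_left _ (two_pow_clog_le_two_mul (by lia)))
    _ = 54 * κ * n := by ring

end Parameters

/-! ### Symmetrization -/

section Symmetrization

variable {g : List ℕ → Fin n → Bool} {a s : Secret n}

/-- The strategy that plays `g` against the relabelled secret `relabel a s` when the secret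
is `s`. -/
def twist (g : List ℕ → Fin n → Bool) (a : Secret n) : List ℕ → Fin n → Bool :=
  fun h r => xor (g h (a.2 r)) (a.1 (a.2 r))

lemma score_twist (h : List ℕ) :
    score n s.1 s.2 (twist g a h) = score n (relabel a s).1 (relabel a s).2 (g h) := by
  have hmatch (j : Fin n) : s.1 (s.2 j) = twist g a h (s.2 j) ↔
      (relabel a s).1 ((relabel a s).2 j) = g h ((relabel a s).2 j) := by
    rw [twist, relabel_snd_apply, relabel_fst_apply, ← Bool.xor_left_inj (z := a.1 (a.2 (s.2 j))),
      Bool.xor_assoc, Bool.xor_self, Bool.xor_false]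
  simp only [score, hmatch]

lemma histScores_twist (k : ℕ) :
    histScores n (twist g a) s.1 s.2 k = histScores n g (relabel a s).1 (relabel a s).2 k := by
  induction k with
  | zero => rfl
  | succ k ih => rw [histScores, histScores, ih, score_twist]

lemma timeToPrefix_twist_le {t : ℕ} (h : IdentifiesPrefix n g (relabel a s).1 (relabel a s).2 q t) :
    timeToPrefix n (twist g a) s.1 s.2 q ≤ t := by
  refine sInf_le ⟨t, rfl, fun z' π' hscore j hj => ?_⟩
  have hagree := h (relabel a (z', π')).1 (relabel a (z', π')).2 (fun k hk => by
    rw [← score_twist, ← score_twist, ← histScores_twist]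
    exact hscore k hk) j hj
  simpa only [relabel_snd_apply, relabel_fst_apply, EmbeddingLike.apply_eq_iff_eq,
    Bool.xor_left_inj] using hagree

lemma relabel_left_injective (s : Secret n) : Function.Injective fun a => relabel a s := by
  intro a b h
  obtain ⟨hbit, hperm⟩ := Prod.ext_iff.1 h
  have hperm : a.2 = b.2 := Equiv.ext fun r => by
    simpa [relabel] using DFunLike.congr_fun hperm (s.2.symm r)
  refine Prod.ext (funext fun r => ?_) hperm
  simpa [relabel, hperm] using congrFun hbit r

lemma tsum_map_mul {α β : Type*} (p : PMF α) (φ : α → β) (u : β → ℝ≥0∞) :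
    ∑' b, p.map φ b * u b = ∑' a, p a * u (φ a) := by
  classical
  simp only [PMF.map_apply, ← ENNReal.tsum_mul_right, ite_mul, zero_mul]
  rw [ENNReal.tsum_comm]
  exact tsum_congr fun a => tsum_ite_eq (φ a) _

lemma sum_timeToPrefix_twist_le {τ : Secret n → ℕ}
    (h : ∀ s, IdentifiesPrefix n g s.1 s.2 q (τ s)) (s : Secret n) :
    ∑ a : Secret n, (timeToPrefix n (twist g a) s.1 s.2 q : ℝ≥0∞) ≤ ∑ a : Secret n, (τ a : ℝ≥0∞) :=
  calc ∑ a : Secret n, (timeToPrefix n (twist g a) s.1 s.2 q : ℝ≥0∞)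
      ≤ ∑ a : Secret n, (τ (relabel a s) : ℝ≥0∞) := sum_le_sum fun a _ =>
        mod_cast ENat.toENNReal_le.2 (timeToPrefix_twist_le (h (relabel a s)))
    _ = ∑ a : Secret n, (τ a : ℝ≥0∞) :=
        (relabel_left_injective s).bijective_of_finite.sum_comp fun a => (τ a : ℝ≥0∞)

/-- A uniformly random relabelling turns every secret into a uniformly random one. -/
lemma exists_pmf_of_solvable_univ {B : ℕ}
    (h : Solvable q (univ : Finset (Secret n)) (fun _ => B)) :
    ∃ D : PMF (List ℕ → Fin n → Bool), D.support.Finite ∧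
      ∀ (z : Fin n → Bool) (π : Equiv.Perm (Fin n)),
        ∑' g, D g * (timeToPrefix n g z π q : ℝ≥0∞) ≤ B := by
  obtain ⟨g, τ, hg, hτ⟩ := h
  have hident (s : Secret n) : IdentifiesPrefix n g s.1 s.2 q (τ s) :=
    fun z' π' => hg s (mem_univ s) (z', π') (mem_univ _)
  have hsum : ∑ a : Secret n, (τ a : ℝ≥0∞) ≤ Fintype.card (Secret n) * B := by
    rw [sum_const, card_univ, smul_eq_mul] at hτ
    exact_mod_cast hτ
  refine ⟨(PMF.uniformOfFintype (Secret n)).map (twist g), ?_, fun z π => ?_⟩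
  · rw [PMF.support_map]
    exact (Set.toFinite _).image _
  · rw [tsum_map_mul, tsum_fintype]
    simp only [PMF.uniformOfFintype_apply]
    rw [← mul_sum, mul_comm, ← div_eq_mul_inv]
    exact ENNReal.div_le_of_le_mul'
      ((sum_timeToPrefix_twist_le hident (z, π)).trans hsum)

end Symmetrization

/-! ### Logarithms -/

section Logarithm

lemma two_le_logb_two (hn : 4 ≤ n) : 2 ≤ Real.logb 2 n := by
  rw [Real.le_logb_iff_rpow_le one_lt_two (by positivity)]
  norm_num
  exact_mod_cast hn

lemma one_le_logb_logb (hn : 4 ≤ n) : 1 ≤ Real.logb 2 (Real.logb 2 n) := by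
  have hlog := two_le_logb_two hn
  rwa [Real.le_logb_iff_rpow_le one_lt_two (two_pos.trans_le hlog), Real.rpow_one]

lemma logb_two_le_clog (n : ℕ) : Real.logb 2 n ≤ Nat.clog 2 n := by
  rw [← Real.natCeil_logb_natCast 2 n]
  exact Nat.le_ceil _

lemma clog_clog_le (hn : 4 ≤ n) :
    (Nat.clog 2 (Nat.clog 2 n) : ℝ) ≤ 3 * Real.logb 2 (Real.logb 2 n) := by
  have hlog := two_le_logb_two hn
  have hloglog := one_le_logb_logb hn
  have hlower := logb_two_le_clog n
  have hupper : (Nat.clog 2 n : ℝ) ≤ 2 * Real.logb 2 n := by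
    rw [← Real.natCeil_logb_natCast 2 n, Nat.cast_ofNat]
    linarith [Nat.ceil_lt_add_one (zero_le_two.trans hlog)]
  have hlogb : Real.logb 2 (Nat.clog 2 n) ≤ 1 + Real.logb 2 (Real.logb 2 n) := by
    rw [← Real.logb_self_eq_one one_lt_two, ← Real.logb_mul two_ne_zero (by positivity)]
    exact Real.logb_le_logb_of_le one_lt_two (by linarith) hupper
  have hnonneg : 0 ≤ Real.logb 2 (Nat.clog 2 n) := Real.logb_nonneg one_lt_two (by linarith)
  rw [← Real.natCeil_logb_natCast 2 (Nat.clog 2 n), Nat.cast_ofNat]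
  linarith [Nat.ceil_lt_add_one hnonneg]

lemma le_clog_mul_sub_sub (hn : 4 ≤ n) :
    n ≤ Nat.clog 2 n * (n - (n - ⌈(n : ℝ) / Real.logb 2 n⌉₊)) := by
  have hlog := two_le_logb_two hn
  have hle : ⌈(n : ℝ) / Real.logb 2 n⌉₊ ≤ n :=
    Nat.ceil_le.2 (div_le_self (Nat.cast_nonneg n) (one_le_two.trans hlog))
  rw [Nat.sub_sub_self hle, ← Nat.cast_le (α := ℝ), Nat.cast_mul]
  calc (n : ℝ) = Real.logb 2 n * (n / Real.logb 2 n) := (mul_div_cancel₀ _ (by positivity)).symm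
    _ ≤ Nat.clog 2 n * ⌈(n : ℝ) / Real.logb 2 n⌉₊ :=
        mul_le_mul (logb_two_le_clog n) (Nat.le_ceil _) (by positivity) (Nat.cast_nonneg _)

end Logarithm

end HiddenPermutation

/-- The first phase: with `q = n − ⌈n / log₂ n⌉`, a randomized strategy determines
`π(1),…,π(q)` and `z_{π(1)},…,z_{π(q)}` in expected `O(n log log n)` queries. -/
theorem randomized_first_phase :
    ∃ C : ℝ, 0 < C ∧ ∀ n : ℕ, 4 ≤ n →
      ∃ D : PMF (List ℕ → Fin n → Bool), D.support.Finite ∧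
        ∀ (z : Fin n → Bool) (π : Equiv.Perm (Fin n)),
          ∑' g, D g * (timeToPrefix n g z π (n - ⌈(n : ℝ) / Real.logb 2 n⌉₊) : ℝ≥0∞) ≤
            ENNReal.ofReal (C * n * Real.logb 2 (Real.logb 2 n)) := by
  refine ⟨162, by norm_num, fun n hn => ?_⟩
  obtain ⟨D, hfinite, hD⟩ := HiddenPermutation.exists_pmf_of_solvable_univ
    (HiddenPermutation.solvable_univ_of_clog hn (Nat.sub_le _ _)
      (HiddenPermutation.le_clog_mul_sub_sub hn))
  refine ⟨D, hfinite, fun z π => (hD z π).trans ?_⟩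
  rw [← ENNReal.ofReal_natCast]
  refine ENNReal.ofReal_le_ofReal ?_
  calc ((54 * Nat.clog 2 (Nat.clog 2 n) * n : ℕ) : ℝ)
      = 54 * Nat.clog 2 (Nat.clog 2 n) * n := by push_cast; ring
    _ ≤ 54 * (3 * Real.logb 2 (Real.logb 2 n)) * n := by
        gcongr
        exact HiddenPermutation.clog_clog_le hn
    _ = 162 * n * Real.logb 2 (Real.logb 2 n) := by ring
end

section
/- Fix n ∈ ℕ, t ≥ 1, queries x^1,…,x^t ∈ {0,1}^n and scores s^1,…,s^t ∈ {0,…,n}, and let V_1,…,V_n be the associated parity candidate sets. Then any two distinct active candidate sets V_i and V_j (i ≠ j) are disjoint: V_i ∩ V_j = ∅. -/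
/-- The parity candidate sets after the first `r` queries. The hidden string is tied to the
permutation by `z_{π(i)} = i mod 2` (1-indexed), so with 0-indexed `i : Fin n` representing
position `i+1`, after a query `x^{r+1} = x r` with score `s r` the set `V_i` is intersected
with `P_{(i+1) mod 2}(x r)` if `i+1 ≤ s r`, with `P_{(s r) mod 2}(x r)` if `i+1 = s r + 1`,
and is unchanged otherwise, where `P_b(x) = {p : x_p = b}`. -/
def parityCand (n : ℕ) (x : ℕ → Fin n → Bool) (s : ℕ → ℕ) : ℕ → Fin n → Finset (Fin n)
  | 0, _ => Finset.univ
  | r + 1, i =>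
      if (i : ℕ) + 1 ≤ s r then
        (parityCand n x s r i).filter (fun p => x r p = decide (((i : ℕ) + 1) % 2 = 1))
      else if (i : ℕ) = s r then
        (parityCand n x s r i).filter (fun p => x r p = decide (s r % 2 = 1))
      else parityCand n x s r i

/-- The maximum score `m = max{s^1,…,s^t}` among the first `t` queries. -/
def maxScore (t : ℕ) (s : ℕ → ℕ) : ℕ := (Finset.range t).sup s

/-- `V_i` (0-indexed `i`, representing 1-indexed position `i+1`) is active:
`i+1 < min{n/3, m}` and for some query `r` the score was `s^r = (i+1) − 1` while all earlier
queries had score `< (i+1) − 1`. -/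
def IsActive (n t : ℕ) (s : ℕ → ℕ) (i : Fin n) : Prop :=
  (((i : ℕ) + 1 : ℝ) < min ((n : ℝ) / 3) ((maxScore t s : ℕ) : ℝ)) ∧
  ∃ r < t, s r = (i : ℕ) ∧ ∀ r' < r, s r' < (i : ℕ)

/-! A query whose score is at least both (0-indexed) positions forces the bits of a common element
of the two candidate sets, and hence makes the parities prescribing those bits agree. For `a < b`, a
query of score exactly `b` forces `a + 1 ≡ b`, while a query of larger score forces
`a + 1 ≡ b + 1`. -/

section

variable {n t : ℕ} {x : ℕ → Fin n → Bool} {s : ℕ → ℕ}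

-- The minimum merges the two constraining cases: it equals `i + 1` if `i < s r`,
-- and `s r` if `i = s r`.
theorem mem_parityCand_iff {i p : Fin n} :
    p ∈ parityCand n x s t i ↔
      ∀ r < t, (i : ℕ) ≤ s r → x r p = decide (min ((i : ℕ) + 1) (s r) % 2 = 1) := by
  induction t with
  | zero => simp [parityCand]
  | succ t ih =>
    rw [Nat.forall_lt_succ_right, ← ih, parityCand]
    rcases lt_trichotomy (i : ℕ) (s t) with hlt | heq | hgt
    · rw [if_pos (Nat.succ_le_of_lt hlt), Finset.mem_filter, min_eq_left (Nat.succ_le_of_lt hlt),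
        imp_iff_right hlt.le]
    · rw [if_neg (by omega), if_pos heq, Finset.mem_filter, min_eq_right (by omega),
        imp_iff_right heq.le]
    · rw [if_neg (by omega), if_neg hgt.ne']
      simp [hgt.not_ge]

theorem modEq_two_of_mem_parityCand {a b p : Fin n} (ha : p ∈ parityCand n x s t a)
    (hb : p ∈ parityCand n x s t b) {r : ℕ} (hr : r < t) (har : (a : ℕ) ≤ s r)
    (hbr : (b : ℕ) ≤ s r) :
    min ((a : ℕ) + 1) (s r) ≡ min ((b : ℕ) + 1) (s r) [MOD 2] := by
  have hbits :
      decide (min ((a : ℕ) + 1) (s r) % 2 = 1) = decide (min ((b : ℕ) + 1) (s r) % 2 = 1) :=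
    (mem_parityCand_iff.mp ha r hr har).symm.trans (mem_parityCand_iff.mp hb r hr hbr)
  rw [decide_eq_decide] at hbits
  unfold Nat.ModEq
  omega

theorem lt_maxScore_iff {k : ℕ} : k < maxScore t s ↔ ∃ r < t, k < s r := by
  simp [maxScore, Finset.lt_sup_iff]

namespace IsActive

variable {i : Fin n}

theorem exists_score_eq (hi : IsActive n t s i) : ∃ r < t, s r = i :=
  let ⟨_, r, hr, hsr, _⟩ := hi
  ⟨r, hr, hsr⟩

theorem lt_maxScore (hi : IsActive n t s i) : (i : ℕ) < maxScore t s := by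
  have hsucc : (i : ℕ) + 1 < maxScore t s := by exact_mod_cast hi.1.trans_le (min_le_right _ _)
  exact Nat.lt_of_succ_lt hsucc

end IsActive

theorem active_candidate_sets_disjoint_general {a b : Fin n} (hab : a < b)
    (hb : ∃ r < t, s r = b) (hbm : (b : ℕ) < maxScore t s) :
    parityCand n x s t a ∩ parityCand n x s t b = ∅ := by
  obtain ⟨r, hr, hsr⟩ := hb
  obtain ⟨q, hq, hsq⟩ := lt_maxScore_iff.mp hbm
  rw [Fin.lt_def] at hab
  refine Finset.disjoint_iff_inter_eq_empty.mp (Finset.disjoint_left.mpr fun p hpa hpb ↦ ?_)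
  have hattained : (a : ℕ) + 1 ≡ b [MOD 2] := by
    simpa [hsr, hab] using modEq_two_of_mem_parityCand hpa hpb hr (by omega) (by omega)
  have hexceeded : (a : ℕ) + 1 ≡ b + 1 [MOD 2] := by
    have h := modEq_two_of_mem_parityCand hpa hpb hq (by omega) (by omega)
    rwa [min_eq_left (by omega), min_eq_left (by omega)] at h
  unfold Nat.ModEq at hattained hexceeded
  omega

end

/-- Corollary 5.3: any two distinct active parity candidate sets are disjoint. -/
theorem active_candidate_sets_disjoint (n t : ℕ) (ht : 1 ≤ t)
    (x : ℕ → Fin n → Bool) (s : ℕ → ℕ) (hs : ∀ r < t, s r ≤ n)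
    (a b : Fin n) (ha : IsActive n t s a) (hb : IsActive n t s b) (hab : a ≠ b) :
    parityCand n x s t a ∩ parityCand n x s t b = ∅ := by
  obtain h | h := hab.lt_or_gt
  · exact active_candidate_sets_disjoint_general h hb.exists_score_eq hb.lt_maxScore
  · rw [Finset.inter_comm]
    exact active_candidate_sets_disjoint_general h ha.exists_score_eq ha.lt_maxScore
end
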